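/- arXiv:2205.02342 — 4 statements merged into one kernel-verified Lean document; each statement's English description precedes it below -/
import Mathlib

section
/- For all 0 ≤ p ≤ 1, all positive semidefinite A, B in M_m(ℂ), all K in M_n(ℂ), and all Schwarz maps Φ : M_n(ℂ) → M_m(ℂ), it holds that tr[Φ(K)* A^p Φ(K) B^{1-p}] ≤ tr[K* Φ†(A)^p K Φ†(B)^{1-p}]. -/
open Matrix
open scoped ComplexOrder

/-- Real power of a matrix, defined spectrally for Hermitian matrices (junk value `0` otherwise). -/
noncomputable def mpow {k : ℕ} (A : Matrix (Fin k) (Fin k) ℂ) (p : ℝ) : Matrix (Fin k) (Fin k) ℂ :=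
  if hA : A.IsHermitian then
    (hA.eigenvectorUnitary : Matrix (Fin k) (Fin k) ℂ) *
      Matrix.diagonal (fun i => ((hA.eigenvalues i ^ p : ℝ) : ℂ)) *
      (hA.eigenvectorUnitary : Matrix (Fin k) (Fin k) ℂ)ᴴ
  else 0

/-- A Schwarz map: `Φ(K*K) ≥ Φ(K)*Φ(K)` for all `K`. -/
def IsSchwarz {a b : ℕ} (Φ : Matrix (Fin a) (Fin a) ℂ →ₗ[ℂ] Matrix (Fin b) (Fin b) ℂ) : Prop :=
  ∀ K, (Φ (Kᴴ * K) - (Φ K)ᴴ * Φ K).PosSemidef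

/-- A positive map: sends positive semidefinite matrices to positive semidefinite matrices. -/
def IsPositiveMap {a b : ℕ} (Φ : Matrix (Fin a) (Fin a) ℂ →ₗ[ℂ] Matrix (Fin b) (Fin b) ℂ) : Prop :=
  ∀ X, X.PosSemidef → (Φ X).PosSemidef

/-- `Ψ` is the Hilbert–Schmidt adjoint of `Φ`: `⟨X, Φ Y⟩ = ⟨Ψ X, Y⟩`. -/
def IsHSAdjoint {a b : ℕ} (Φ : Matrix (Fin a) (Fin a) ℂ →ₗ[ℂ] Matrix (Fin b) (Fin b) ℂ)
    (Ψ : Matrix (Fin b) (Fin b) ℂ →ₗ[ℂ] Matrix (Fin a) (Fin a) ℂ) : Prop :=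
  ∀ X Y, (Xᴴ * Φ Y).trace = ((Ψ X)ᴴ * Y).trace

open MeasureTheory in
theorem aux_scalar (p : ℝ) (hp : p ∈ Set.Ioo (0:ℝ) 1) (a b : ℝ) (ha : 0 ≤ a) (hb : 0 ≤ b) :
    a ^ p * b ^ (1 - p) = (∫ t in Set.Ioi 0, Real.rpowIntegrand₀₁ p t 1)⁻¹ *
      ∫ t in Set.Ioi 0, b * Real.rpowIntegrand₀₁ p t (a / b) := by
  rw [integral_const_mul, mul_left_comm, ← Real.rpow_eq_const_mul_integral hp (by positivity)]
  rcases hb.eq_or_lt with rfl | hb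
  · rw [Real.zero_rpow (by linarith [hp.2])]; simp
  · rw [Real.div_rpow ha hb.le, Real.rpow_sub hb, Real.rpow_one]
    ring

theorem aux_integrand (p : ℝ) (hp : p ∈ Set.Ioo (0:ℝ) 1) (t a b : ℝ) (ht : 0 < t)
    (ha : 0 ≤ a) (hb : 0 ≤ b) :
    b * Real.rpowIntegrand₀₁ p t (a / b) = t ^ (p - 2) * (a * (t * b) / (a + t * b)) := by
  rcases hb.eq_or_lt with rfl | hb
  · simp
  · have h1 : 0 < t * b := by positivity
    have h2 : t + a / b ≠ 0 := by positivity
    have h3 : a + t * b ≠ 0 := by positivity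
    have h4 : t ^ p = t ^ (p - 2) * t ^ 2 := by
      rw [← Real.rpow_natCast, ← Real.rpow_add ht]; norm_num
    have h5 : (t + a / b)⁻¹ = b / (a + t * b) := by
      field_simp; ring
    rw [Real.rpowIntegrand₀₁, h4, h5]
    field_simp
    ring

/-- coordinates in eigenbases -/
noncomputable def crd {k : ℕ} {A B : Matrix (Fin k) (Fin k) ℂ} (hA : A.IsHermitian)
    (hB : B.IsHermitian) (X : Matrix (Fin k) (Fin k) ℂ) : Matrix (Fin k) (Fin k) ℂ :=
  (hA.eigenvectorUnitary : Matrix (Fin k) (Fin k) ℂ)ᴴ * X * hB.eigenvectorUnitary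

theorem crd_surj {k : ℕ} {A B : Matrix (Fin k) (Fin k) ℂ} (hA : A.IsHermitian)
    (hB : B.IsHermitian) (Y : Matrix (Fin k) (Fin k) ℂ) : ∃ X, crd hA hB X = Y := by
  refine ⟨(hA.eigenvectorUnitary : Matrix (Fin k) (Fin k) ℂ) * Y *
    (hB.eigenvectorUnitary : Matrix (Fin k) (Fin k) ℂ)ᴴ, ?_⟩
  have h1 : (hA.eigenvectorUnitary : Matrix (Fin k) (Fin k) ℂ)ᴴ * hA.eigenvectorUnitary = 1 :=
    Unitary.coe_star_mul_self hA.eigenvectorUnitary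
  have h2 : (hB.eigenvectorUnitary : Matrix (Fin k) (Fin k) ℂ)ᴴ * hB.eigenvectorUnitary = 1 :=
    Unitary.coe_star_mul_self hB.eigenvectorUnitary
  unfold crd
  rw [Matrix.mul_assoc, Matrix.mul_assoc, h2, Matrix.mul_one, ← Matrix.mul_assoc, h1,
    Matrix.one_mul]

theorem crd_add {k : ℕ} {A B : Matrix (Fin k) (Fin k) ℂ} (hA : A.IsHermitian)
    (hB : B.IsHermitian) (X Y : Matrix (Fin k) (Fin k) ℂ) :
    crd hA hB (X + Y) = crd hA hB X + crd hA hB Y := by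
  simp [crd, Matrix.mul_add, Matrix.add_mul]

theorem crd_sub {k : ℕ} {A B : Matrix (Fin k) (Fin k) ℂ} (hA : A.IsHermitian)
    (hB : B.IsHermitian) (X Y : Matrix (Fin k) (Fin k) ℂ) :
    crd hA hB (X - Y) = crd hA hB X - crd hA hB Y := by
  simp [crd, Matrix.mul_sub, Matrix.sub_mul]

theorem form_eq {k : ℕ} {A B : Matrix (Fin k) (Fin k) ℂ} (hA : A.IsHermitian)
    (hB : B.IsHermitian) (X : Matrix (Fin k) (Fin k) ℂ) (p q : ℝ) :
    (Xᴴ * mpow A p * X * mpow B q).trace.re =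
      ∑ i, ∑ j, hA.eigenvalues i ^ p * hB.eigenvalues j ^ q * ‖crd hA hB X i j‖ ^ 2 := by
  have h : (Xᴴ * mpow A p * X * mpow B q).trace =
      ((crd hA hB X)ᴴ * Matrix.diagonal (fun i => ((hA.eigenvalues i ^ p : ℝ) : ℂ)) *
        crd hA hB X * Matrix.diagonal (fun i => ((hB.eigenvalues i ^ q : ℝ) : ℂ))).trace := by
    simp only [mpow, dif_pos hA, dif_pos hB, crd, conjTranspose_mul, conjTranspose_conjTranspose]
    rw [← Matrix.mul_assoc, Matrix.trace_mul_comm]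
    simp only [Matrix.mul_assoc]
  have h2 : (Xᴴ * mpow A p * X * mpow B q).trace = ((∑ i, ∑ j, hA.eigenvalues i ^ p *
      hB.eigenvalues j ^ q * ‖crd hA hB X i j‖ ^ 2 : ℝ) : ℂ) := by
    rw [h, Finset.sum_comm]
    generalize crd hA hB X = E
    simp only [Matrix.trace, Matrix.diag_apply, Matrix.mul_diagonal]
    push_cast
    refine Finset.sum_congr rfl fun j _ => ?_
    rw [Matrix.mul_apply, Finset.sum_mul]
    refine Finset.sum_congr rfl fun i _ => ?_
    rw [Matrix.mul_diagonal, ← Complex.conj_mul']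
    simp only [conjTranspose_apply, RCLike.star_def]
    ring
  rw [h2, Complex.ofReal_re]

theorem mpow_zero' {k : ℕ} {A : Matrix (Fin k) (Fin k) ℂ} (hA : A.IsHermitian) :
    mpow A 0 = 1 := by
  have h1 : (hA.eigenvectorUnitary : Matrix (Fin k) (Fin k) ℂ) *
    (hA.eigenvectorUnitary : Matrix (Fin k) (Fin k) ℂ)ᴴ = 1 :=
    Unitary.coe_mul_star_self hA.eigenvectorUnitary
  simp [mpow, dif_pos hA, h1]

theorem mpow_one' {k : ℕ} {A : Matrix (Fin k) (Fin k) ℂ} (hA : A.IsHermitian) :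
    mpow A 1 = A := by
  conv_rhs => rw [hA.spectral_theorem, Unitary.conjStarAlgAut_apply]
  simp only [mpow, dif_pos hA, Real.rpow_one]
  rfl

theorem form_one {k : ℕ} {A B : Matrix (Fin k) (Fin k) ℂ} (hA : A.IsHermitian)
    (hB : B.IsHermitian) (X : Matrix (Fin k) (Fin k) ℂ) :
    (Xᴴ * A * X).trace.re = ∑ i, ∑ j, hA.eigenvalues i * ‖crd hA hB X i j‖ ^ 2 := by
  have := form_eq hA hB X 1 0
  simpa [mpow_one' hA, mpow_zero' hB] using this

theorem form_zero {k : ℕ} {A B : Matrix (Fin k) (Fin k) ℂ} (hA : A.IsHermitian)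
    (hB : B.IsHermitian) (X : Matrix (Fin k) (Fin k) ℂ) :
    (Xᴴ * X * B).trace.re = ∑ i, ∑ j, hB.eigenvalues j * ‖crd hA hB X i j‖ ^ 2 := by
  have := form_eq hA hB X 0 1
  simpa [mpow_one' hB, mpow_zero' hA] using this

theorem schwarz_pos {a b : ℕ} {Φ : Matrix (Fin a) (Fin a) ℂ →ₗ[ℂ] Matrix (Fin b) (Fin b) ℂ}
    (hΦ : IsSchwarz Φ) (X : Matrix (Fin a) (Fin a) ℂ) : (Φ (Xᴴ * X)).PosSemidef := by
  have := (hΦ X).add (posSemidef_conjTranspose_mul_self (Φ X))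
  simpa using this

theorem schwarz_herm {a b : ℕ} {Φ : Matrix (Fin a) (Fin a) ℂ →ₗ[ℂ] Matrix (Fin b) (Fin b) ℂ}
    (hΦ : IsSchwarz Φ) (X : Matrix (Fin a) (Fin a) ℂ) (hX : Xᴴ = X) : (Φ X)ᴴ = Φ X := by
  have h1 := (schwarz_pos hΦ (X + 1)).1
  have h2 := (schwarz_pos hΦ X).1
  have h3 := (schwarz_pos hΦ 1).1
  have h4 := (h1.sub h2).sub h3
  have h5 : Φ ((X + 1)ᴴ * (X + 1)) - Φ (Xᴴ * X) - Φ (1ᴴ * 1) = (2 : ℂ) • Φ X := by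
    rw [← map_sub, ← map_sub, ← map_smul]
    congr 1
    rw [conjTranspose_add, hX, conjTranspose_one, two_smul]
    noncomm_ring
  rw [h5] at h4
  have h6 : ((2 : ℂ) • Φ X)ᴴ = (2 : ℂ) • Φ X := h4
  rw [conjTranspose_smul] at h6
  have h7 : star (2 : ℂ) = 2 := by simp
  rw [h7] at h6
  exact smul_right_injective _ (two_ne_zero' ℂ) h6

theorem schwarz_star {a b : ℕ} {Φ : Matrix (Fin a) (Fin a) ℂ →ₗ[ℂ] Matrix (Fin b) (Fin b) ℂ}
    (hΦ : IsSchwarz Φ) (X : Matrix (Fin a) (Fin a) ℂ) : Φ Xᴴ = (Φ X)ᴴ := by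
  have h1 := schwarz_herm hΦ (X + Xᴴ) (by simp [add_comm])
  have h2 := schwarz_herm hΦ (Complex.I • (X - Xᴴ)) (by
    rw [conjTranspose_smul, conjTranspose_sub, conjTranspose_conjTranspose, RCLike.star_def,
      Complex.conj_I, neg_smul, ← smul_neg, neg_sub])
  rw [map_add, conjTranspose_add] at h1
  rw [map_smul, conjTranspose_smul, RCLike.star_def, Complex.conj_I, neg_smul, ← smul_neg,
    map_sub, conjTranspose_sub] at h2
  have h3 := smul_right_injective _ Complex.I_ne_zero h2
  have h4 : (2 : ℂ) • Φ Xᴴ = (2 : ℂ) • (Φ X)ᴴ := by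
    rw [two_smul, two_smul]
    have h5 : Φ Xᴴ + Φ Xᴴ = (Φ X + Φ Xᴴ) - (Φ X - Φ Xᴴ) := by abel
    rw [h5, ← h1, ← h3]
    abel
  exact smul_right_injective _ (two_ne_zero' ℂ) h4

open scoped MatrixOrder in
theorem trace_mul_nonneg {k : ℕ} {A B : Matrix (Fin k) (Fin k) ℂ} (hA : A.PosSemidef)
    (hB : B.PosSemidef) : 0 ≤ (A * B).trace := by
  obtain ⟨C, rfl⟩ := CStarAlgebra.nonneg_iff_eq_star_mul_self.mp hA.nonneg
  rw [Matrix.mul_assoc, Matrix.trace_mul_comm]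
  exact (hB.mul_mul_conjTranspose_same C).trace_nonneg

theorem adj_pos {a b : ℕ} {Φ : Matrix (Fin a) (Fin a) ℂ →ₗ[ℂ] Matrix (Fin b) (Fin b) ℂ}
    {Ψ : Matrix (Fin b) (Fin b) ℂ →ₗ[ℂ] Matrix (Fin a) (Fin a) ℂ}
    (hΦ : IsSchwarz Φ) (hadj : IsHSAdjoint Φ Ψ) {A : Matrix (Fin b) (Fin b) ℂ}
    (hA : A.PosSemidef) : (Ψ A).PosSemidef := by
  have hH : (Ψ A)ᴴ = Ψ A := by
    rw [Matrix.ext_iff_trace_mul_right]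
    intro Y
    have h1 : (Ψ A * Y).trace = star ((Ψ A)ᴴ * Yᴴ).trace := by
      rw [← trace_conjTranspose, conjTranspose_mul, conjTranspose_conjTranspose,
        conjTranspose_conjTranspose, Matrix.trace_mul_comm]
    rw [h1, ← hadj, ← hadj, schwarz_star hΦ, ← trace_conjTranspose, conjTranspose_mul,
      conjTranspose_conjTranspose, conjTranspose_conjTranspose, Matrix.trace_mul_comm,
      hA.1.eq]
  refine PosSemidef.of_dotProduct_mulVec_nonneg hH fun x => ?_
  let N : Matrix (Fin a) (Fin a) ℂ := vecMulVec x (star x)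
  have hN : (Φ N).PosSemidef := by
    have hN0 : N.PosSemidef := posSemidef_vecMulVec_self_star x
    open scoped MatrixOrder in
    obtain ⟨C, hC⟩ := CStarAlgebra.nonneg_iff_eq_star_mul_self.mp hN0.nonneg
    rw [hC]
    exact schwarz_pos hΦ C
  have h := trace_mul_nonneg hA hN
  have h2 := hadj A N
  rw [hA.1.eq, hH] at h2
  rw [h2, Matrix.mul_vecMulVec, Matrix.trace_vecMulVec, dotProduct_comm] at h
  exact h

theorem pt_le (a b : ℝ) (ha : 0 ≤ a) (hb : 0 ≤ b) (y z : ℂ) :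
    a * b / (a + b) * ‖y + z‖ ^ 2 ≤ a * ‖y‖ ^ 2 + b * ‖z‖ ^ 2 := by
  rcases (add_nonneg ha hb).eq_or_lt with h | h
  · rw [← h]; simp; positivity
  · have h1 : ‖y + z‖ ^ 2 ≤ (‖y‖ + ‖z‖) ^ 2 := by gcongr; exact norm_add_le _ _
    refine (mul_le_mul_of_nonneg_left h1 (by positivity)).trans ?_
    rw [div_mul_eq_mul_div, div_le_iff₀ h]
    nlinarith [sq_nonneg (a * ‖y‖ - b * ‖z‖)]

theorem pt_eq (a b : ℝ) (ha : 0 ≤ a) (hb : 0 ≤ b) (x : ℂ) :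
    a * ‖((b / (a + b) : ℝ) : ℂ) * x‖ ^ 2 + b * ‖x - ((b / (a + b) : ℝ) : ℂ) * x‖ ^ 2 =
      a * b / (a + b) * ‖x‖ ^ 2 := by
  rcases (add_nonneg ha hb).eq_or_lt with h | h
  · have : b = 0 := by linarith
    rw [← h]; simp [this]
  · have : x - ((b / (a + b) : ℝ) : ℂ) * x = ((a / (a + b) : ℝ) : ℂ) * x := by
      have h2 : a / (a + b) = 1 - b / (a + b) := by field_simp; ring
      rw [h2]; push_cast; ring
    rw [this, norm_mul, norm_mul, Complex.norm_real, Complex.norm_real, mul_pow, mul_pow,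
      Real.norm_eq_abs, Real.norm_eq_abs, sq_abs, sq_abs]
    field_simp
    ring

theorem kfun {n m : ℕ} {A B : Matrix (Fin m) (Fin m) ℂ} (hA : A.PosSemidef) (hB : B.PosSemidef)
    {A' B' : Matrix (Fin n) (Fin n) ℂ} (hA' : A'.PosSemidef) (hB' : B'.PosSemidef)
    (K : Matrix (Fin n) (Fin n) ℂ)
    (Φ : Matrix (Fin n) (Fin n) ℂ →ₗ[ℂ] Matrix (Fin m) (Fin m) ℂ)
    (h1 : ∀ X, ((Φ X)ᴴ * A * Φ X).trace.re ≤ (Xᴴ * A' * X).trace.re)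
    (h0 : ∀ X, ((Φ X)ᴴ * Φ X * B).trace.re ≤ (Xᴴ * X * B').trace.re)
    (t : ℝ) (ht : 0 < t) :
    ∑ i, ∑ j, (hA.1.eigenvalues i * (t * hB.1.eigenvalues j) /
        (hA.1.eigenvalues i + t * hB.1.eigenvalues j)) * ‖crd hA.1 hB.1 (Φ K) i j‖ ^ 2 ≤
    ∑ i, ∑ j, (hA'.1.eigenvalues i * (t * hB'.1.eigenvalues j) /
        (hA'.1.eigenvalues i + t * hB'.1.eigenvalues j)) * ‖crd hA'.1 hB'.1 K i j‖ ^ 2 := by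
  obtain ⟨Y, hY⟩ := crd_surj hA'.1 hB'.1 (Matrix.of fun i j =>
    (((t * hB'.1.eigenvalues j) / (hA'.1.eigenvalues i + t * hB'.1.eigenvalues j) : ℝ) : ℂ) *
      crd hA'.1 hB'.1 K i j)
  have hK : Φ K = Φ Y + Φ (K - Y) := by rw [← map_add]; congr 1; abel
  calc _ ≤ ((Φ Y)ᴴ * A * Φ Y).trace.re + t * ((Φ (K - Y))ᴴ * Φ (K - Y) * B).trace.re := by
        rw [form_one hA.1 hB.1, form_zero hA.1 hB.1, hK, crd_add, Finset.mul_sum,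
          ← Finset.sum_add_distrib]
        refine Finset.sum_le_sum fun i _ => ?_
        rw [Finset.mul_sum, ← Finset.sum_add_distrib]
        refine Finset.sum_le_sum fun j _ => ?_
        rw [← mul_assoc t _ (_ ^ 2)]
        exact pt_le _ _ (hA.eigenvalues_nonneg i) (mul_nonneg ht.le (hB.eigenvalues_nonneg j)) _ _
    _ ≤ (Yᴴ * A' * Y).trace.re + t * ((K - Y)ᴴ * (K - Y) * B').trace.re :=
        add_le_add (h1 _) (mul_le_mul_of_nonneg_left (h0 _) ht.le)
    _ = _ := by
        rw [form_one hA'.1 hB'.1, form_zero hA'.1 hB'.1, crd_sub, hY, Finset.mul_sum,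
          ← Finset.sum_add_distrib]
        refine Finset.sum_congr rfl fun i _ => ?_
        rw [Finset.mul_sum, ← Finset.sum_add_distrib]
        refine Finset.sum_congr rfl fun j _ => ?_
        rw [← mul_assoc t _ (_ ^ 2)]
        exact pt_eq _ _ (hA'.eigenvalues_nonneg i)
          (mul_nonneg ht.le (hB'.eigenvalues_nonneg j)) _

open MeasureTheory in
theorem form_integral {k : ℕ} (p : ℝ) (hp : p ∈ Set.Ioo (0:ℝ) 1) (a b : Fin k → ℝ)
    (ha : ∀ i, 0 ≤ a i) (hb : ∀ i, 0 ≤ b i) (c : Fin k → Fin k → ℝ) :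
    IntegrableOn (fun t => ∑ i, ∑ j, b j * Real.rpowIntegrand₀₁ p t (a i / b j) * c i j)
      (Set.Ioi 0) ∧
    ∑ i, ∑ j, a i ^ p * b j ^ (1 - p) * c i j =
      (∫ t in Set.Ioi 0, Real.rpowIntegrand₀₁ p t 1)⁻¹ *
      ∫ t in Set.Ioi 0, ∑ i, ∑ j, b j * Real.rpowIntegrand₀₁ p t (a i / b j) * c i j := by
  have hint : ∀ i j, IntegrableOn (fun t => b j * Real.rpowIntegrand₀₁ p t (a i / b j) * c i j)
      (Set.Ioi 0) := fun i j =>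
    ((Real.integrableOn_rpowIntegrand₀₁_Ioi hp
      (div_nonneg (ha i) (hb j))).const_mul (b j)).mul_const _
  refine ⟨integrable_finsetSum _ fun i _ => integrable_finsetSum _ fun j _ => hint i j, ?_⟩
  rw [integral_finsetSum _ fun i _ => integrable_finsetSum _ fun j _ => hint i j, Finset.mul_sum]
  refine Finset.sum_congr rfl fun i _ => ?_
  rw [integral_finsetSum _ fun j _ => hint i j, Finset.mul_sum]
  refine Finset.sum_congr rfl fun j _ => ?_
  rw [aux_scalar p hp _ _ (ha i) (hb j), integral_mul_const, mul_assoc]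

theorem stmt0 {n m : ℕ} (p : ℝ) (hp0 : 0 ≤ p) (hp1 : p ≤ 1)
    (A B : Matrix (Fin m) (Fin m) ℂ) (hA : A.PosSemidef) (hB : B.PosSemidef)
    (K : Matrix (Fin n) (Fin n) ℂ)
    (Φ : Matrix (Fin n) (Fin n) ℂ →ₗ[ℂ] Matrix (Fin m) (Fin m) ℂ)
    (Ψ : Matrix (Fin m) (Fin m) ℂ →ₗ[ℂ] Matrix (Fin n) (Fin n) ℂ)
    (hΦ : IsSchwarz Φ) (hadj : IsHSAdjoint Φ Ψ) :
    ((Φ K)ᴴ * mpow A p * Φ K * mpow B (1 - p)).trace.re ≤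
      (Kᴴ * mpow (Ψ A) p * K * mpow (Ψ B) (1 - p)).trace.re := by
  have hA' := adj_pos hΦ hadj hA
  have hB' := adj_pos hΦ hadj hB
  have h0 : ∀ X, ((Φ X)ᴴ * Φ X * B).trace.re ≤ (Xᴴ * X * Ψ B).trace.re := by
    intro X
    have h := trace_mul_nonneg hB (hΦ X)
    have h2 := hadj B (Xᴴ * X)
    rw [hB.1.eq, hB'.1.eq] at h2
    rw [Matrix.mul_sub, trace_sub, h2, Matrix.trace_mul_comm, Matrix.trace_mul_comm B] at h
    have := (Complex.le_def.mp h).1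
    simp only [Complex.zero_re, Complex.sub_re] at this
    linarith
  have h1 : ∀ X, ((Φ X)ᴴ * A * Φ X).trace.re ≤ (Xᴴ * Ψ A * X).trace.re := by
    intro X
    have h := trace_mul_nonneg hA (hΦ Xᴴ)
    have h2 := hadj A (X * Xᴴ)
    rw [hA.1.eq, hA'.1.eq] at h2
    rw [schwarz_star hΦ, conjTranspose_conjTranspose, conjTranspose_conjTranspose,
      Matrix.mul_sub, trace_sub, h2, ← Matrix.mul_assoc, ← Matrix.mul_assoc,
      Matrix.trace_mul_comm, Matrix.trace_mul_comm _ (Φ X)ᴴ, ← Matrix.mul_assoc,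
      ← Matrix.mul_assoc] at h
    have := (Complex.le_def.mp h).1
    simp only [Complex.zero_re, Complex.sub_re] at this
    linarith
  rcases hp0.eq_or_lt with rfl | hp0
  · rw [sub_zero, mpow_zero' hA.1, mpow_zero' hA'.1, mpow_one' hB.1, mpow_one' hB'.1,
      Matrix.mul_one, Matrix.mul_one]
    exact h0 K
  rcases hp1.eq_or_lt with rfl | hp1
  · rw [sub_self, mpow_zero' hB.1, mpow_zero' hB'.1, mpow_one' hA.1, mpow_one' hA'.1,
      Matrix.mul_one, Matrix.mul_one]
    exact h1 K
  have hp : p ∈ Set.Ioo (0:ℝ) 1 := ⟨hp0, hp1⟩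
  rw [form_eq hA.1 hB.1, form_eq hA'.1 hB'.1]
  obtain ⟨i1, e1⟩ := form_integral p hp _ _ hA.eigenvalues_nonneg hB.eigenvalues_nonneg
    (fun i j => ‖crd hA.1 hB.1 (Φ K) i j‖ ^ 2)
  obtain ⟨i2, e2⟩ := form_integral p hp _ _ hA'.eigenvalues_nonneg hB'.eigenvalues_nonneg
    (fun i j => ‖crd hA'.1 hB'.1 K i j‖ ^ 2)
  rw [e1, e2]
  refine mul_le_mul_of_nonneg_left ?_ (inv_nonneg.mpr (Real.integral_rpowIntegrand₀₁_one_pos hp).le)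
  refine MeasureTheory.setIntegral_mono_on i1 i2 measurableSet_Ioi fun t ht => ?_
  have ht : 0 < t := ht
  have h := mul_le_mul_of_nonneg_left (kfun hA hB hA' hB' K Φ h1 h0 t ht)
    (Real.rpow_nonneg ht.le (p - 2))
  simp only [Finset.mul_sum, ← mul_assoc (t ^ (p - 2))] at h
  simp only [aux_integrand p hp t _ _ ht (hA.eigenvalues_nonneg _) (hB.eigenvalues_nonneg _),
    aux_integrand p hp t _ _ ht (hA'.eigenvalues_nonneg _) (hB'.eigenvalues_nonneg _)]
  exact h
end

section
/- For all 0 ≤ t ≤ 1, all positive definite X, Y ∈ M_m(ℂ), all K ∈ M_m(ℂ), and all Schwarz maps Φ : M_n(ℂ) → M_m(ℂ) with Φ†(I) positive definite, it holds that tr[Φ†(K*) Φ†(Y)^{t-1} Φ†(K) Φ†(X)^{-t}] ≤ tr[K* Y^{t-1} K X^{-t}]. -/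
open Matrix
open scoped ComplexOrder

open MeasureTheory in
lemma aux_scalar_s2 (t : ℝ) (ht : t ∈ Set.Ioo (0:ℝ) 1) (x y : ℝ) (hx : 0 < x) (hy : 0 < y) :
    IntegrableOn (fun l : ℝ => l ^ (t - 1) * (y + l * x)⁻¹) (Set.Ioi 0) ∧
    ∫ l in Set.Ioi (0:ℝ), l ^ (t - 1) * (y + l * x)⁻¹ =
      y ^ (t - 1) * x ^ (-t) * ∫ l in Set.Ioi (0:ℝ), Real.rpowIntegrand₀₁ t l 1 := by
  have hyx : 0 < y / x := div_pos hy hx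
  have he : Set.EqOn (fun l : ℝ => y⁻¹ * Real.rpowIntegrand₀₁ t l (y / x))
      (fun l : ℝ => l ^ (t - 1) * (y + l * x)⁻¹) (Set.Ioi 0) := by
    intro l hl
    have hl' : 0 < l := hl
    simp only
    rw [Real.rpowIntegrand₀₁_eq_pow_div ht hl'.le hyx.le]
    have h1 : l + y / x ≠ 0 := by positivity
    have h2 : y + l * x ≠ 0 := by positivity
    have h3 : l * x + y ≠ 0 := by positivity
    field_simp
    ring
  have hi := (Real.integrableOn_rpowIntegrand₀₁_Ioi ht hyx.le).const_mul y⁻¹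
  refine ⟨IntegrableOn.congr_fun hi he measurableSet_Ioi, ?_⟩
  rw [← setIntegral_congr_fun measurableSet_Ioi he, integral_const_mul,
    Real.integral_rpowIntegrand₀₁_eq_rpow_mul_const ht hyx.le, Real.div_rpow hy.le hx.le,
    Real.rpow_sub hy, Real.rpow_neg hx.le, Real.rpow_one]
  field_simp

open MeasureTheory in
lemma aux_integral {n m : ℕ} (t : ℝ) (ht : t ∈ Set.Ioo (0:ℝ) 1)
    (y x : Fin n → ℝ) (y' x' : Fin m → ℝ) (hy : ∀ i, 0 < y i) (hx : ∀ i, 0 < x i)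
    (hy' : ∀ i, 0 < y' i) (hx' : ∀ i, 0 < x' i)
    (w : Fin n → Fin n → ℝ) (w' : Fin m → Fin m → ℝ)
    (h : ∀ l : ℝ, 0 < l → ∑ i, ∑ j, w i j * (y i + l * x j)⁻¹ ≤
      ∑ i, ∑ j, w' i j * (y' i + l * x' j)⁻¹) :
    ∑ i, ∑ j, w i j * (y i ^ (t - 1) * x j ^ (-t)) ≤
      ∑ i, ∑ j, w' i j * (y' i ^ (t - 1) * x' j ^ (-t)) := by
  have key : ∀ (k : ℕ) (y x : Fin k → ℝ) (_ : ∀ i, 0 < y i) (_ : ∀ i, 0 < x i)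
      (w : Fin k → Fin k → ℝ),
      IntegrableOn (fun l : ℝ => ∑ i, ∑ j, w i j * (l ^ (t - 1) * (y i + l * x j)⁻¹)) (Set.Ioi 0) ∧
      ∫ l in Set.Ioi (0:ℝ), (∑ i, ∑ j, w i j * (l ^ (t - 1) * (y i + l * x j)⁻¹)) =
        (∑ i, ∑ j, w i j * (y i ^ (t - 1) * x j ^ (-t))) *
          ∫ l in Set.Ioi (0:ℝ), Real.rpowIntegrand₀₁ t l 1 := by
    intro k y x hy hx w
    have h1 : ∀ i j, IntegrableOn (fun l : ℝ => w i j * (l ^ (t - 1) * (y i + l * x j)⁻¹))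
        (Set.Ioi 0) := fun i j => (aux_scalar_s2 t ht _ _ (hx j) (hy i)).1.const_mul _
    refine ⟨integrable_finsetSum _ fun i _ => integrable_finsetSum _ fun j _ => h1 i j, ?_⟩
    rw [integral_finsetSum _ fun i _ => integrable_finsetSum _ fun j _ => h1 i j, Finset.sum_mul]
    refine Finset.sum_congr rfl fun i _ => ?_
    rw [integral_finsetSum _ fun j _ => h1 i j, Finset.sum_mul]
    refine Finset.sum_congr rfl fun j _ => ?_
    rw [integral_const_mul, (aux_scalar_s2 t ht _ _ (hx j) (hy i)).2]
    ring
  obtain ⟨i1, e1⟩ := key n y x hy hx w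
  obtain ⟨i2, e2⟩ := key m y' x' hy' hx' w'
  have hC := Real.integral_rpowIntegrand₀₁_one_pos ht
  have := setIntegral_mono_on i1 i2 measurableSet_Ioi (fun l hl => by
    have hl' : 0 < l := hl
    have := mul_le_mul_of_nonneg_left (h l hl') (Real.rpow_nonneg hl'.le (t - 1))
    simp only [Finset.mul_sum] at this
    simp only [mul_left_comm _ (l ^ (t-1))]
    exact this)
  rw [e1, e2] at this
  exact le_of_mul_le_mul_right this hC

lemma aux_trace {k : ℕ} (U V : Matrix (Fin k) (Fin k) ℂ) (d e : Fin k → ℝ)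
    (W : Matrix (Fin k) (Fin k) ℂ) :
    (Wᴴ * (U * diagonal (fun i => (d i : ℂ)) * Uᴴ) * W *
      (V * diagonal (fun i => (e i : ℂ)) * Vᴴ)).trace.re =
      ∑ i, ∑ j, Complex.normSq ((Uᴴ * W * V) i j) * (d i * e j) := by
  have : (Wᴴ * (U * diagonal (fun i => (d i : ℂ)) * Uᴴ) * W *
      (V * diagonal (fun i => (e i : ℂ)) * Vᴴ)).trace =
      ((Uᴴ * W * V)ᴴ * diagonal (fun i => (d i : ℂ)) * ((Uᴴ * W * V) *
        diagonal (fun i => (e i : ℂ)))).trace := by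
    rw [← Matrix.mul_assoc, Matrix.trace_mul_comm]
    simp only [conjTranspose_mul, conjTranspose_conjTranspose, Matrix.mul_assoc]
  rw [this]
  simp only [Matrix.trace, Matrix.diag, Matrix.mul_apply (M := _ * diagonal _), Complex.re_sum]
  rw [Finset.sum_comm]
  refine Finset.sum_congr rfl fun i _ => Finset.sum_congr rfl fun j _ => ?_
  rw [Matrix.mul_diagonal, Matrix.mul_diagonal, conjTranspose_apply]
  simp [Complex.normSq_apply]
  ring

lemma aux_inner {k : ℕ} (U V : Matrix (Fin k) (Fin k) ℂ) (hU : U * Uᴴ = 1) (hV : V * Vᴴ = 1)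
    (W K : Matrix (Fin k) (Fin k) ℂ) :
    (Wᴴ * K).trace.re =
      ∑ i, ∑ j, (star ((Uᴴ * W * V) i j) * (Uᴴ * K * V) i j).re := by
  have : (Wᴴ * K).trace = ((Uᴴ * W * V)ᴴ * (Uᴴ * K * V)).trace := by
    have : (Uᴴ * W * V)ᴴ * (Uᴴ * K * V) = Vᴴ * (Wᴴ * (U * Uᴴ) * K * V) := by
      simp only [conjTranspose_mul, conjTranspose_conjTranspose, Matrix.mul_assoc]
    rw [this, Matrix.trace_mul_comm Vᴴ, hU, Matrix.mul_assoc, hV]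
    simp
  rw [this]
  simp only [Matrix.trace, Matrix.diag, Matrix.mul_apply (M := (Uᴴ * W * V)ᴴ), Complex.re_sum]
  rw [Finset.sum_comm]
  rfl

/-- the eigenvector matrix -/
noncomputable def evm {k : ℕ} {A : Matrix (Fin k) (Fin k) ℂ} (hA : A.PosDef) :
    Matrix (Fin k) (Fin k) ℂ := hA.1.eigenvectorUnitary

lemma evm_mul {k : ℕ} {A : Matrix (Fin k) (Fin k) ℂ} (hA : A.PosDef) : evm hA * (evm hA)ᴴ = 1 :=
  (Matrix.mem_unitaryGroup_iff).1 hA.1.eigenvectorUnitary.2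

lemma evm_mul' {k : ℕ} {A : Matrix (Fin k) (Fin k) ℂ} (hA : A.PosDef) : (evm hA)ᴴ * evm hA = 1 :=
  (Matrix.mem_unitaryGroup_iff').1 hA.1.eigenvectorUnitary.2

lemma mpow_eq {k : ℕ} {A : Matrix (Fin k) (Fin k) ℂ} (hA : A.PosDef) (p : ℝ) :
    mpow A p = evm hA * diagonal (fun i => ((hA.1.eigenvalues i ^ p : ℝ) : ℂ)) * (evm hA)ᴴ := by
  rw [mpow, dif_pos hA.1]; rfl

lemma self_eq {k : ℕ} {A : Matrix (Fin k) (Fin k) ℂ} (hA : A.PosDef) :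
    A = evm hA * diagonal (fun i => ((hA.1.eigenvalues i : ℝ) : ℂ)) * (evm hA)ᴴ :=
  hA.1.spectral_theorem

lemma one_eq {k : ℕ} {A : Matrix (Fin k) (Fin k) ℂ} (hA : A.PosDef) :
    1 = evm hA * diagonal (fun i => (((fun _ => 1 : Fin k → ℝ) i : ℝ) : ℂ)) * (evm hA)ᴴ := by
  have : diagonal (fun i : Fin k => (((fun _ => 1 : Fin k → ℝ) i : ℝ) : ℂ)) = 1 := by
    simp
  rw [this, Matrix.mul_one, evm_mul]

/-- weights -/
noncomputable def wt {k : ℕ} {X Y : Matrix (Fin k) (Fin k) ℂ} (hX : X.PosDef) (hY : Y.PosDef)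
    (K : Matrix (Fin k) (Fin k) ℂ) (i j : Fin k) : ℝ :=
  Complex.normSq (((evm hY)ᴴ * K * evm hX) i j)

lemma quad_left {k : ℕ} {X Y : Matrix (Fin k) (Fin k) ℂ} (hX : X.PosDef) (hY : Y.PosDef)
    (W : Matrix (Fin k) (Fin k) ℂ) :
    (Wᴴ * Y * W).trace.re = ∑ i, ∑ j, wt hX hY W i j * hY.1.eigenvalues i := by
  have := aux_trace (evm hY) (evm hX) hY.1.eigenvalues (fun _ => 1) W
  rw [← one_eq, ← self_eq] at this
  simpa [wt] using this

lemma quad_right {k : ℕ} {X Y : Matrix (Fin k) (Fin k) ℂ} (hX : X.PosDef) (hY : Y.PosDef)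
    (W : Matrix (Fin k) (Fin k) ℂ) :
    (Wᴴ * W * X).trace.re = ∑ i, ∑ j, wt hX hY W i j * hX.1.eigenvalues j := by
  have := aux_trace (evm hY) (evm hX) (fun _ => 1) hX.1.eigenvalues W
  rw [← one_eq, ← self_eq] at this
  simpa [wt] using this

lemma quad_pow {k : ℕ} {X Y : Matrix (Fin k) (Fin k) ℂ} (hX : X.PosDef) (hY : Y.PosDef)
    (W : Matrix (Fin k) (Fin k) ℂ) (p q : ℝ) :
    (Wᴴ * mpow Y p * W * mpow X q).trace.re =
      ∑ i, ∑ j, wt hX hY W i j * (hY.1.eigenvalues i ^ p * hX.1.eigenvalues j ^ q) := by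
  rw [mpow_eq hX, mpow_eq hY]
  exact aux_trace (evm hY) (evm hX) (fun i => hY.1.eigenvalues i ^ p)
    (fun i => hX.1.eigenvalues i ^ q) W

lemma legendre_upper {k : ℕ} {X Y : Matrix (Fin k) (Fin k) ℂ} (hX : X.PosDef) (hY : Y.PosDef)
    (a b : ℝ) (hab : ∀ x y : ℝ, 0 < x → 0 < y → 0 < a * y + b * x)
    (W K : Matrix (Fin k) (Fin k) ℂ) :
    2 * (Wᴴ * K).trace.re - a * (Wᴴ * Y * W).trace.re - b * (Wᴴ * W * X).trace.re ≤
      ∑ i, ∑ j, wt hX hY K i j * (a * hY.1.eigenvalues i + b * hX.1.eigenvalues j)⁻¹ := by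
  rw [quad_left hX hY, quad_right hX hY, aux_inner _ _ (evm_mul hY) (evm_mul hX) W K]
  simp only [Finset.mul_sum, ← Finset.sum_sub_distrib]
  refine Finset.sum_le_sum fun i _ => Finset.sum_le_sum fun j _ => ?_
  have hc := hab _ _ (hX.eigenvalues_pos j) (hY.eigenvalues_pos i)
  simp only [wt]
  generalize ((evm hY)ᴴ * W * evm hX) i j = z
  generalize ((evm hY)ᴴ * K * evm hX) i j = u
  set c := a * hY.1.eigenvalues i + b * hX.1.eigenvalues j with hcdef
  have : a * (Complex.normSq z * hY.1.eigenvalues i) + b * (Complex.normSq z * hX.1.eigenvalues j)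
      = c * Complex.normSq z := by rw [hcdef]; ring
  have h2 : 2 * (star z * u).re - c * Complex.normSq z ≤ Complex.normSq u * c⁻¹ := by
    rw [← div_eq_mul_inv, le_div_iff₀ hc]
    simp [Complex.normSq_apply]
    nlinarith [sq_nonneg (c * z.re - u.re), sq_nonneg (c * z.im - u.im)]
  linarith

lemma legendre_attain {k : ℕ} {X Y : Matrix (Fin k) (Fin k) ℂ} (hX : X.PosDef) (hY : Y.PosDef)
    (a b : ℝ) (hab : ∀ x y : ℝ, 0 < x → 0 < y → 0 < a * y + b * x)
    (K : Matrix (Fin k) (Fin k) ℂ) : ∃ W : Matrix (Fin k) (Fin k) ℂ,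
    2 * (Wᴴ * K).trace.re - a * (Wᴴ * Y * W).trace.re - b * (Wᴴ * W * X).trace.re =
      ∑ i, ∑ j, wt hX hY K i j * (a * hY.1.eigenvalues i + b * hX.1.eigenvalues j)⁻¹ := by
  let Z : Matrix (Fin k) (Fin k) ℂ := Matrix.of fun i j => ((evm hY)ᴴ * K * evm hX) i j *
    (((a * hY.1.eigenvalues i + b * hX.1.eigenvalues j)⁻¹ : ℝ) : ℂ)
  have hZ : (evm hY)ᴴ * (evm hY * Z * (evm hX)ᴴ) * evm hX = Z := by
    have : (evm hY)ᴴ * (evm hY * Z * (evm hX)ᴴ) * evm hX =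
      ((evm hY)ᴴ * evm hY) * Z * ((evm hX)ᴴ * evm hX) := by simp only [Matrix.mul_assoc]
    rw [this, evm_mul', evm_mul']; simp
  refine ⟨evm hY * Z * (evm hX)ᴴ, ?_⟩
  rw [quad_left hX hY, quad_right hX hY, aux_inner _ _ (evm_mul hY) (evm_mul hX) _ K]
  simp only [Finset.mul_sum, ← Finset.sum_sub_distrib]
  refine Finset.sum_congr rfl fun i _ => Finset.sum_congr rfl fun j _ => ?_
  have hc := hab _ _ (hX.eigenvalues_pos j) (hY.eigenvalues_pos i)
  simp only [wt, hZ, Z, Matrix.of_apply]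
  generalize ((evm hY)ᴴ * K * evm hX) i j = u
  set c := a * hY.1.eigenvalues i + b * hX.1.eigenvalues j with hcdef
  have h3 : ∀ r : ℝ, a * (r * hY.1.eigenvalues i) + b * (r * hX.1.eigenvalues j)
      = c * r := by intro r; rw [hcdef]; ring
  rw [sub_sub, h3]
  simp [Complex.normSq_apply]
  field_simp
  ring

lemma Schwarz_star {a b : ℕ} {Φ : Matrix (Fin a) (Fin a) ℂ →ₗ[ℂ] Matrix (Fin b) (Fin b) ℂ}
    (hΦ : IsSchwarz Φ) (K : Matrix (Fin a) (Fin a) ℂ) : Φ Kᴴ = (Φ K)ᴴ := by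
  have h0 : ∀ K, (Φ (Kᴴ * K))ᴴ = Φ (Kᴴ * K) := by
    intro K
    have := (hΦ K).1
    rw [IsHermitian, conjTranspose_sub, conjTranspose_mul, conjTranspose_conjTranspose] at this
    exact sub_left_injective this
  have h1 : (Φ 1)ᴴ = Φ 1 := by simpa using h0 1
  have h2 : ∀ K, (Φ K)ᴴ + (Φ Kᴴ)ᴴ = Φ K + Φ Kᴴ := by
    intro K
    have e := h0 (1 + K)
    have e' := h0 K
    have : (1 + K)ᴴ * (1 + K) = 1 + (K + Kᴴ) + Kᴴ * K := by
      simp [add_mul, mul_add]; abel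
    rw [this] at e
    simp only [map_add, conjTranspose_add, h1, e'] at e
    exact add_left_cancel (add_right_cancel e)
  have e1 := h2 K
  have e2 := h2 (Complex.I • K)
  simp only [conjTranspose_smul, map_smul] at e2
  ext i j
  have f1 := congrFun (congrFun e1 i) j
  have f2 := congrFun (congrFun e2 i) j
  simp at f1 f2 ⊢
  have : Complex.I * ((starRingEnd ℂ) (Φ K j i) - (starRingEnd ℂ) (Φ Kᴴ j i)
    + (Φ K i j) - Φ Kᴴ i j) = 0 := by linear_combination -f2
  have := (mul_eq_zero.1 this).resolve_left Complex.I_ne_zero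
  linear_combination (-1/2) * (f1 + this)

lemma adj_star {a b : ℕ} {Φ : Matrix (Fin a) (Fin a) ℂ →ₗ[ℂ] Matrix (Fin b) (Fin b) ℂ}
    {Ψ : Matrix (Fin b) (Fin b) ℂ →ₗ[ℂ] Matrix (Fin a) (Fin a) ℂ}
    (hΦ : IsSchwarz Φ) (hadj : IsHSAdjoint Φ Ψ) (K : Matrix (Fin b) (Fin b) ℂ) :
    Ψ Kᴴ = (Ψ K)ᴴ := by
  have : (Ψ Kᴴ)ᴴ = Ψ K := by
    rw [Matrix.ext_iff_trace_mul_right]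
    intro Z
    rw [← hadj, conjTranspose_conjTranspose]
    have := congrArg star (hadj K Zᴴ)
    rw [← trace_conjTranspose, ← trace_conjTranspose, conjTranspose_mul, conjTranspose_mul,
      Schwarz_star hΦ] at this
    simp only [conjTranspose_conjTranspose] at this
    rw [Matrix.trace_mul_comm, this, Matrix.trace_mul_comm]
  rw [← this, conjTranspose_conjTranspose]

lemma trace_aux {k : ℕ} {Y : Matrix (Fin k) (Fin k) ℂ} (hY : Y.PosDef)
    {Q : Matrix (Fin k) (Fin k) ℂ} (hQ : Q.PosSemidef) :
    0 ≤ (Y * Q).trace ∧ (Q.trace ≠ 0 → 0 < (Y * Q).trace) := by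
  set P := (evm hY)ᴴ * Q * evm hY with hP
  have hPp : P.PosSemidef := hQ.conjTranspose_mul_mul_same _
  have e1 : (Y * Q).trace = ∑ i, (hY.1.eigenvalues i : ℂ) * P i i := by
    conv_lhs => rw [self_eq hY]
    rw [Matrix.mul_assoc, Matrix.mul_assoc, Matrix.trace_mul_comm, Matrix.mul_assoc]
    simp [Matrix.trace, hP, Matrix.diagonal_mul]
  have e2 : Q.trace = ∑ i, P i i := by
    have : P.trace = Q.trace := by
      rw [hP, Matrix.mul_assoc, Matrix.trace_mul_comm, Matrix.mul_assoc, evm_mul, Matrix.mul_one]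
    rw [← this]; rfl
  have hpos : ∀ i, (0:ℂ) < (hY.1.eigenvalues i : ℂ) := fun i => by
    exact_mod_cast hY.eigenvalues_pos i
  have hnn : ∀ i, 0 ≤ (hY.1.eigenvalues i : ℂ) * P i i := fun i =>
    mul_nonneg (hpos i).le hPp.diag_nonneg
  rw [e1, e2]
  refine ⟨Finset.sum_nonneg fun i _ => hnn i, fun h => ?_⟩
  refine lt_of_le_of_ne (Finset.sum_nonneg fun i _ => hnn i) fun h0 => h ?_
  have := (Finset.sum_eq_zero_iff_of_nonneg (fun i _ => hnn i)).1 h0.symm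
  exact Finset.sum_eq_zero fun i hi => (mul_eq_zero.1 (this i hi)).resolve_left (hpos i).ne'

lemma adj_posDef {a b : ℕ} {Φ : Matrix (Fin a) (Fin a) ℂ →ₗ[ℂ] Matrix (Fin b) (Fin b) ℂ}
    {Ψ : Matrix (Fin b) (Fin b) ℂ →ₗ[ℂ] Matrix (Fin a) (Fin a) ℂ}
    (hΦ : IsSchwarz Φ) (hadj : IsHSAdjoint Φ Ψ) (hΨ1 : (Ψ 1).PosDef)
    {Y : Matrix (Fin b) (Fin b) ℂ} (hY : Y.PosDef) : (Ψ Y).PosDef := by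
  have hH : ∀ Y : Matrix (Fin b) (Fin b) ℂ, Y.IsHermitian → (Ψ Y).IsHermitian := fun Y hY => by
    rw [IsHermitian, ← adj_star hΦ hadj, hY.eq]
  have hf : ∀ (Y : Matrix (Fin b) (Fin b) ℂ) (_ : Y.IsHermitian) (v : Fin a → ℂ),
      star v ⬝ᵥ (Ψ Y *ᵥ v) = (Y * Φ (vecMulVec v (star v))).trace := by
    intro Y hY v
    have := hadj Y (vecMulVec v (star v))
    rw [hY.eq, (hH Y hY).eq] at this
    rw [this, Matrix.mul_vecMulVec, Matrix.trace_vecMulVec, dotProduct_comm]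
  refine .of_dotProduct_mulVec_pos (hH Y hY.1) fun v hv => ?_
  have h1 := hΨ1.dotProduct_mulVec_pos hv
  rw [hf _ isHermitian_one, Matrix.one_mul] at h1
  rw [hf _ hY.1]
  refine (trace_aux hY ?_).2 h1.ne'
  obtain ⟨B, hB⟩ : ∃ B : Matrix (Fin a) (Fin a) ℂ, vecMulVec v (star v) = Bᴴ * B := by
    by_cases ha : a = 0
    · subst ha; exact ⟨0, by ext i; exact i.elim0⟩
    · let i0 : Fin a := ⟨0, Nat.pos_of_ne_zero ha⟩
      refine ⟨Matrix.of fun i j => if i = i0 then star (v j) else 0, ?_⟩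
      ext i j
      simp [Matrix.mul_apply, vecMulVec_apply, apply_ite, ite_mul]
  rw [hB]
  have := (hΦ B).add (posSemidef_conjTranspose_mul_self (Φ B))
  simpa using this

theorem stmt2 {n m : ℕ} (t : ℝ) (ht0 : 0 ≤ t) (ht1 : t ≤ 1)
    (X Y : Matrix (Fin m) (Fin m) ℂ) (hX : X.PosDef) (hY : Y.PosDef)
    (K : Matrix (Fin m) (Fin m) ℂ)
    (Φ : Matrix (Fin n) (Fin n) ℂ →ₗ[ℂ] Matrix (Fin m) (Fin m) ℂ)
    (Ψ : Matrix (Fin m) (Fin m) ℂ →ₗ[ℂ] Matrix (Fin n) (Fin n) ℂ)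
    (hΦ : IsSchwarz Φ) (hadj : IsHSAdjoint Φ Ψ) (hΨ1 : (Ψ 1).PosDef) :
    (Ψ Kᴴ * mpow (Ψ Y) (t - 1) * Ψ K * mpow (Ψ X) (-t)).trace.re ≤
      (Kᴴ * mpow Y (t - 1) * K * mpow X (-t)).trace.re := by
  have hY' := adj_posDef hΦ hadj hΨ1 hY
  have hX' := adj_posDef hΦ hadj hΨ1 hX
  have key : ∀ a b : ℝ, 0 ≤ a → 0 ≤ b →
      (∀ x y : ℝ, 0 < x → 0 < y → 0 < a * y + b * x) →
      ∑ i, ∑ j, wt hX' hY' (Ψ K) i j * (a * hY'.1.eigenvalues i + b * hX'.1.eigenvalues j)⁻¹ ≤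
      ∑ i, ∑ j, wt hX hY K i j * (a * hY.1.eigenvalues i + b * hX.1.eigenvalues j)⁻¹ := by
    intro a b ha hb hab
    obtain ⟨Z, hZ⟩ := legendre_attain hX' hY' a b hab (Ψ K)
    have hup := legendre_upper hX hY a b hab (Φ Z) K
    rw [← hZ]
    refine le_trans ?_ hup
    have e1 : (Zᴴ * Ψ K).trace.re = ((Φ Z)ᴴ * K).trace.re := by
      have := congrArg star (hadj K Z)
      rw [← trace_conjTranspose, ← trace_conjTranspose, conjTranspose_mul, conjTranspose_mul] at this
      simp only [conjTranspose_conjTranspose] at this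
      rw [this]
    have e2 : ((Φ Z)ᴴ * Y * Φ Z).trace.re ≤ (Zᴴ * Ψ Y * Z).trace.re := by
      have h := hadj Y (Z * Zᴴ)
      rw [hY.1.eq, hY'.1.eq, ← Matrix.mul_assoc, Matrix.trace_mul_comm (Ψ Y * Z),
        ← Matrix.mul_assoc] at h
      rw [← h, Matrix.mul_assoc, Matrix.trace_mul_comm, Matrix.mul_assoc]
      have h2 := hΦ Zᴴ
      rw [Schwarz_star hΦ] at h2
      simp only [conjTranspose_conjTranspose] at h2
      have h3 := (trace_aux hY h2).1
      rw [Matrix.mul_sub, trace_sub, sub_nonneg] at h3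
      exact (Complex.le_def.1 h3).1
    have e3 : ((Φ Z)ᴴ * Φ Z * X).trace.re ≤ (Zᴴ * Z * Ψ X).trace.re := by
      have h := hadj X (Zᴴ * Z)
      rw [hX.1.eq, hX'.1.eq, Matrix.trace_mul_comm (Ψ X)] at h
      rw [← h, Matrix.trace_mul_comm]
      have h3 := (trace_aux hX (hΦ Z)).1
      rw [Matrix.mul_sub, trace_sub, sub_nonneg] at h3
      exact (Complex.le_def.1 h3).1
    have := mul_le_mul_of_nonneg_left e2 ha
    have := mul_le_mul_of_nonneg_left e3 hb
    linarith
  rw [adj_star hΦ hadj, quad_pow hX' hY', quad_pow hX hY]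
  rcases ht0.eq_or_lt with rfl | ht0
  · have := key 1 0 zero_le_one le_rfl (fun x y hx hy => by simpa using hy)
    simpa [Real.rpow_neg_one] using this
  rcases ht1.eq_or_lt with rfl | ht1
  · have := key 0 1 le_rfl zero_le_one (fun x y hx hy => by simpa using hx)
    simpa [Real.rpow_neg_one] using this
  refine aux_integral t ⟨ht0, ht1⟩ _ _ _ _ hY'.eigenvalues_pos hX'.eigenvalues_pos
    hY.eigenvalues_pos hX.eigenvalues_pos _ _ fun l hl => ?_
  have := key 1 l zero_le_one hl.le (fun x y hx hy => by positivity)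
  simpa using this
end

section
/- For any B ∈ M_n(ℂ) and all 0 < p ≤ 1, the map A ↦ tr[(B* A^p B)^{1/p}] is concave on the positive semidefinite matrices M_n^+(ℂ). -/
open Matrix
open scoped ComplexOrder

noncomputable def SS {n : ℕ} (U V B : Matrix (Fin n) (Fin n) ℂ) (f g : Fin n → ℝ) : ℝ :=
  ∑ i, ∑ j, f i * g j * Complex.normSq ((Uᴴ * B * V) i j)

noncomputable def DD {n : ℕ} (U : Matrix (Fin n) (Fin n) ℂ) (f : Fin n → ℝ) :
    Matrix (Fin n) (Fin n) ℂ := U * Matrix.diagonal (fun i => ((f i : ℝ) : ℂ)) * Uᴴ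

lemma trace_SS {n : ℕ} (U V B : Matrix (Fin n) (Fin n) ℂ) (f g : Fin n → ℝ) :
    (Bᴴ * DD U f * B * DD V g).trace = (SS U V B f g : ℂ) := by
  have h1 : (Bᴴ * DD U f * B * DD V g).trace =
      ((Uᴴ * B * V)ᴴ * (Matrix.diagonal (fun i => ((f i : ℝ) : ℂ)) * (Uᴴ * B * V) *
        Matrix.diagonal (fun i => ((g i : ℝ) : ℂ)))).trace := by
    have : Bᴴ * DD U f * B * DD V g = (Bᴴ * DD U f * B * V *
        Matrix.diagonal (fun i => ((g i : ℝ) : ℂ))) * Vᴴ := by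
      simp only [DD, Matrix.mul_assoc]
    rw [this, Matrix.trace_mul_comm]
    simp only [DD, Matrix.mul_assoc, Matrix.conjTranspose_mul, Matrix.conjTranspose_conjTranspose]
  rw [h1, SS]
  generalize Uᴴ * B * V = M
  simp only [Matrix.trace, Matrix.diag_apply]
  simp only [Matrix.mul_apply (M := Mᴴ), Matrix.mul_diagonal,
    Matrix.diagonal_mul, Matrix.conjTranspose_apply]
  rw [Finset.sum_comm]
  push_cast
  refine Finset.sum_congr rfl fun i _ => Finset.sum_congr rfl fun j _ => ?_
  rw [Complex.normSq_eq_conj_mul_self]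
  simp only [Complex.star_def]
  ring

lemma DD_one {n : ℕ} (U : Matrix (Fin n) (Fin n) ℂ) (h : U * Uᴴ = 1) :
    DD U (fun _ => 1) = 1 := by
  simp [DD, h]

/-- variational functional -/
noncomputable def FF {n : ℕ} (t : ℝ) (A X B W : Matrix (Fin n) (Fin n) ℂ) : ℝ :=
  (Wᴴ * A * W).trace.re + t * ((B - W)ᴴ * (B - W) * X).trace.re

lemma FF_eq {n : ℕ} (t : ℝ) (U V B W : Matrix (Fin n) (Fin n) ℂ) (a x : Fin n → ℝ)
    (hU : U * Uᴴ = 1) (hV : V * Vᴴ = 1) :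
    FF t (DD U a) (DD V x) B W = ∑ i, ∑ j, (a i * Complex.normSq ((Uᴴ * W * V) i j) +
      t * x j * Complex.normSq ((Uᴴ * B * V) i j - (Uᴴ * W * V) i j)) := by
  have h1 := trace_SS U V W a (fun _ => 1)
  have h2 := trace_SS U V (B - W) (fun _ => 1) x
  rw [DD_one _ hV, Matrix.mul_one] at h1
  rw [DD_one _ hU, Matrix.mul_one] at h2
  rw [FF, h1, h2]
  simp only [Complex.ofReal_re, SS, Finset.sum_add_distrib, Finset.mul_sum, mul_one, one_mul,
    Matrix.mul_sub, Matrix.sub_mul, Matrix.sub_apply, mul_assoc]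

noncomputable def PP {n : ℕ} (t : ℝ) (U V B : Matrix (Fin n) (Fin n) ℂ) (a x : Fin n → ℝ) : ℝ :=
  ∑ i, ∑ j, (t * a i * x j / (a i + t * x j)) * Complex.normSq ((Uᴴ * B * V) i j)

lemma scalar_min (a y : ℝ) (ha : 0 ≤ a) (hy : 0 ≤ y) (b w : ℂ) :
    a * y / (a + y) * Complex.normSq b ≤ a * Complex.normSq w + y * Complex.normSq (b - w) := by
  rcases (add_nonneg ha hy).eq_or_lt with h | h
  · rw [← h]; simp only [div_zero, zero_mul]
    exact add_nonneg (mul_nonneg ha (Complex.normSq_nonneg _)) (mul_nonneg hy (Complex.normSq_nonneg _))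
  · rw [div_mul_eq_mul_div, div_le_iff₀ h]
    simp only [Complex.normSq_apply, Complex.sub_re, Complex.sub_im]
    nlinarith [sq_nonneg ((a + y) * w.re - y * b.re), sq_nonneg ((a + y) * w.im - y * b.im)]

lemma scalar_min_eq (a y : ℝ) (ha : 0 ≤ a) (hy : 0 ≤ y) (b : ℂ) :
    a * Complex.normSq (((y / (a + y) : ℝ) : ℂ) * b) +
      y * Complex.normSq (b - ((y / (a + y) : ℝ) : ℂ) * b) =
    a * y / (a + y) * Complex.normSq b := by
  rcases (add_nonneg ha hy).eq_or_lt with h | h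
  · have h1 : a = 0 := by linarith
    have h2 : y = 0 := by linarith
    rw [h1, h2]; simp
  · have e : b - ((y / (a + y) : ℝ) : ℂ) * b = ((a / (a + y) : ℝ) : ℂ) * b := by
      have : ((a / (a + y) : ℝ) : ℂ) = 1 - ((y / (a + y) : ℝ) : ℂ) := by
        rw [← Complex.ofReal_one, ← Complex.ofReal_sub]; congr 1; field_simp; ring
      rw [this]; ring
    rw [e, Complex.normSq_mul, Complex.normSq_mul, Complex.normSq_ofReal, Complex.normSq_ofReal]
    field_simp
    ring

lemma PP_le {n : ℕ} (t : ℝ) (ht : 0 ≤ t) (U V B W : Matrix (Fin n) (Fin n) ℂ) (a x : Fin n → ℝ)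
    (hU : U * Uᴴ = 1) (hV : V * Vᴴ = 1) (ha : ∀ i, 0 ≤ a i) (hx : ∀ i, 0 ≤ x i) :
    PP t U V B a x ≤ FF t (DD U a) (DD V x) B W := by
  rw [FF_eq _ _ _ _ _ _ _ hU hV, PP]
  refine Finset.sum_le_sum fun i _ => Finset.sum_le_sum fun j _ => ?_
  have := scalar_min (a i) (t * x j) (ha i) (mul_nonneg ht (hx j))
    ((Uᴴ * B * V) i j) ((Uᴴ * W * V) i j)
  have e : t * a i * x j = a i * (t * x j) := by ring
  rw [e]
  exact this

lemma PP_eq {n : ℕ} (t : ℝ) (ht : 0 ≤ t) (U V B : Matrix (Fin n) (Fin n) ℂ) (a x : Fin n → ℝ)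
    (hU : U * Uᴴ = 1) (hV : V * Vᴴ = 1) (ha : ∀ i, 0 ≤ a i) (hx : ∀ i, 0 ≤ x i) :
    ∃ W, FF t (DD U a) (DD V x) B W = PP t U V B a x := by
  let w : Matrix (Fin n) (Fin n) ℂ := Matrix.of fun i j =>
    ((t * x j / (a i + t * x j) : ℝ) : ℂ) * (Uᴴ * B * V) i j
  refine ⟨U * w * Vᴴ, ?_⟩
  have hU' : Uᴴ * U = 1 := mul_eq_one_comm.mp hU
  have hV' : Vᴴ * V = 1 := mul_eq_one_comm.mp hV
  have hw : Uᴴ * (U * w * Vᴴ) * V = w := by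
    calc Uᴴ * (U * w * Vᴴ) * V = (Uᴴ * U) * w * (Vᴴ * V) := by simp only [Matrix.mul_assoc]
      _ = w := by rw [hU', hV', Matrix.one_mul, Matrix.mul_one]
  rw [FF_eq _ _ _ _ _ _ _ hU hV, PP, hw]
  refine Finset.sum_congr rfl fun i _ => Finset.sum_congr rfl fun j _ => ?_
  have := scalar_min_eq (a i) (t * x j) (ha i) (mul_nonneg ht (hx j)) ((Uᴴ * B * V) i j)
  simp only [w, Matrix.of_apply]
  rw [this]
  congr 2
  ring

lemma FF_lin {n : ℕ} (t c : ℝ) (A₁ A₂ X₁ X₂ B W : Matrix (Fin n) (Fin n) ℂ) :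
    FF t ((c : ℂ) • A₁ + ((1 : ℂ) - (c : ℂ)) • A₂) ((c : ℂ) • X₁ + ((1 : ℂ) - (c : ℂ)) • X₂) B W =
      c * FF t A₁ X₁ B W + (1 - c) * FF t A₂ X₂ B W := by
  have : (1 : ℂ) - (c : ℂ) = ((1 - c : ℝ) : ℂ) := by push_cast; ring
  rw [this]
  simp only [FF, Matrix.mul_add, Matrix.add_mul, Matrix.mul_smul, Matrix.smul_mul,
    Matrix.trace_add, Matrix.trace_smul, Complex.add_re, smul_eq_mul, Complex.re_ofReal_mul]
  ring

lemma PP_concave {n : ℕ} (t c : ℝ) (ht : 0 ≤ t) (hc0 : 0 ≤ c) (hc1 : c ≤ 1)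
    (B U U₁ U₂ V V₁ V₂ : Matrix (Fin n) (Fin n) ℂ) (a a₁ a₂ x x₁ x₂ : Fin n → ℝ)
    (hU : U * Uᴴ = 1) (hV : V * Vᴴ = 1) (ha : ∀ i, 0 ≤ a i) (hx : ∀ i, 0 ≤ x i)
    (hU₁ : U₁ * U₁ᴴ = 1) (hV₁ : V₁ * V₁ᴴ = 1) (ha₁ : ∀ i, 0 ≤ a₁ i) (hx₁ : ∀ i, 0 ≤ x₁ i)
    (hU₂ : U₂ * U₂ᴴ = 1) (hV₂ : V₂ * V₂ᴴ = 1) (ha₂ : ∀ i, 0 ≤ a₂ i) (hx₂ : ∀ i, 0 ≤ x₂ i)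
    (hA : DD U a = (c : ℂ) • DD U₁ a₁ + ((1 : ℂ) - (c : ℂ)) • DD U₂ a₂)
    (hX : DD V x = (c : ℂ) • DD V₁ x₁ + ((1 : ℂ) - (c : ℂ)) • DD V₂ x₂) :
    c * PP t U₁ V₁ B a₁ x₁ + (1 - c) * PP t U₂ V₂ B a₂ x₂ ≤ PP t U V B a x := by
  obtain ⟨W, hW⟩ := PP_eq t ht U V B a x hU hV ha hx
  rw [← hW, hA, hX, FF_lin]
  have h1 := PP_le t ht U₁ V₁ B W a₁ x₁ hU₁ hV₁ ha₁ hx₁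
  have h2 := PP_le t ht U₂ V₂ B W a₂ x₂ hU₂ hV₂ ha₂ hx₂
  have := sub_nonneg.mpr hc1
  gcongr

open MeasureTheory in
lemma int_rep (p a x : ℝ) (hp : p ∈ Set.Ioo (0 : ℝ) 1) (ha : 0 ≤ a) (hx : 0 ≤ x) :
    IntegrableOn (fun t : ℝ => t ^ (p - 2) * (t * a * x / (a + t * x))) (Set.Ioi 0) ∧
    a ^ p * x ^ (1 - p) = (∫ t in Set.Ioi (0 : ℝ), Real.rpowIntegrand₀₁ p t 1)⁻¹ *
      ∫ t in Set.Ioi (0 : ℝ), t ^ (p - 2) * (t * a * x / (a + t * x)) := by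
  have key : Set.EqOn (fun t : ℝ => Real.rpowIntegrand₀₁ p t (a / x) * x)
      (fun t : ℝ => t ^ (p - 2) * (t * a * x / (a + t * x))) (Set.Ioi 0) := by
    intro t ht
    have ht : 0 < t := ht
    simp only [Real.rpowIntegrand₀₁]
    rcases hx.eq_or_lt with h | h
    · simp [← h]
    · rw [Real.rpow_sub ht, Real.rpow_two]
      have h1 : 0 < a + t * x := by positivity
      have h2 : t + a / x = (a + t * x) / x := by field_simp; ring
      rw [h2]
      field_simp
      ring
  have hax : 0 ≤ a / x := div_nonneg ha hx
  constructor
  · exact IntegrableOn.congr_fun ((Real.integrableOn_rpowIntegrand₀₁_Ioi hp hax).mul_const x) key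
      measurableSet_Ioi
  · rw [← setIntegral_congr_fun measurableSet_Ioi key, integral_mul_const, ← mul_assoc,
      ← Real.rpow_eq_const_mul_integral hp hax]
    rcases hx.eq_or_lt with h | h
    · rw [← h, Real.zero_rpow (by linarith [hp.2])]; simp
    · rw [Real.div_rpow ha hx, Real.rpow_sub h, Real.rpow_one]
      field_simp

open MeasureTheory in
lemma SS_rep {n : ℕ} (U V B : Matrix (Fin n) (Fin n) ℂ) (a x : Fin n → ℝ)
    (p : ℝ) (hp : p ∈ Set.Ioo (0 : ℝ) 1) (ha : ∀ i, 0 ≤ a i) (hx : ∀ i, 0 ≤ x i) :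
    IntegrableOn (fun t : ℝ => t ^ (p - 2) * PP t U V B a x) (Set.Ioi 0) ∧
    SS U V B (fun i => a i ^ p) (fun i => x i ^ (1 - p)) =
      (∫ t in Set.Ioi (0 : ℝ), Real.rpowIntegrand₀₁ p t 1)⁻¹ *
      ∫ t in Set.Ioi (0 : ℝ), t ^ (p - 2) * PP t U V B a x := by
  have e : (fun t : ℝ => t ^ (p - 2) * PP t U V B a x) = fun t => ∑ i, ∑ j,
      (t ^ (p - 2) * (t * a i * x j / (a i + t * x j))) * Complex.normSq ((Uᴴ * B * V) i j) := by
    ext t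
    simp only [PP, Finset.mul_sum, mul_assoc]
  have hI : ∀ i j, IntegrableOn (fun t : ℝ => (t ^ (p - 2) * (t * a i * x j / (a i + t * x j))) *
      Complex.normSq ((Uᴴ * B * V) i j)) (Set.Ioi 0) := fun i j =>
    (int_rep p (a i) (x j) hp (ha i) (hx j)).1.mul_const _
  rw [e]
  constructor
  · exact integrable_finsetSum _ fun i _ => integrable_finsetSum _ fun j _ => hI i j
  · rw [integral_finsetSum _ fun i _ => integrable_finsetSum _ fun j _ => hI i j, SS,
      Finset.mul_sum]
    refine Finset.sum_congr rfl fun i _ => ?_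
    rw [integral_finsetSum _ fun j _ => hI i j, Finset.mul_sum]
    refine Finset.sum_congr rfl fun j _ => ?_
    rw [integral_mul_const, (int_rep p (a i) (x j) hp (ha i) (hx j)).2, mul_assoc]

open MeasureTheory in
lemma lieb {n : ℕ} (p c : ℝ) (hp0 : 0 < p) (hp1 : p ≤ 1) (hc0 : 0 ≤ c) (hc1 : c ≤ 1)
    (B U U₁ U₂ V V₁ V₂ : Matrix (Fin n) (Fin n) ℂ) (a a₁ a₂ x x₁ x₂ : Fin n → ℝ)
    (hU : U * Uᴴ = 1) (hV : V * Vᴴ = 1) (ha : ∀ i, 0 ≤ a i) (hx : ∀ i, 0 ≤ x i)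
    (hU₁ : U₁ * U₁ᴴ = 1) (hV₁ : V₁ * V₁ᴴ = 1) (ha₁ : ∀ i, 0 ≤ a₁ i) (hx₁ : ∀ i, 0 ≤ x₁ i)
    (hU₂ : U₂ * U₂ᴴ = 1) (hV₂ : V₂ * V₂ᴴ = 1) (ha₂ : ∀ i, 0 ≤ a₂ i) (hx₂ : ∀ i, 0 ≤ x₂ i)
    (hA : DD U a = (c : ℂ) • DD U₁ a₁ + ((1 : ℂ) - (c : ℂ)) • DD U₂ a₂)
    (hX : DD V x = (c : ℂ) • DD V₁ x₁ + ((1 : ℂ) - (c : ℂ)) • DD V₂ x₂) :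
    c * SS U₁ V₁ B (fun i => a₁ i ^ p) (fun i => x₁ i ^ (1 - p)) +
      (1 - c) * SS U₂ V₂ B (fun i => a₂ i ^ p) (fun i => x₂ i ^ (1 - p)) ≤
      SS U V B (fun i => a i ^ p) (fun i => x i ^ (1 - p)) := by
  rcases hp1.eq_or_lt with rfl | hp1
  · simp only [Real.rpow_one, sub_self, Real.rpow_zero]
    have h : ∀ (U V : Matrix (Fin n) (Fin n) ℂ) (a : Fin n → ℝ), V * Vᴴ = 1 →
        SS U V B a (fun _ => 1) = (Bᴴ * DD U a * B).trace.re := by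
      intro U V a hV
      have := trace_SS U V B a (fun _ => 1)
      rw [DD_one _ hV, Matrix.mul_one] at this
      rw [this, Complex.ofReal_re]
    have e : (1 : ℂ) - (c : ℂ) = ((1 - c : ℝ) : ℂ) := by push_cast; ring
    rw [h _ _ _ hV, h _ _ _ hV₁, h _ _ _ hV₂, hA, e]
    simp only [Matrix.mul_add, Matrix.add_mul, Matrix.mul_smul, Matrix.smul_mul,
      Matrix.trace_add, Matrix.trace_smul, Complex.add_re, smul_eq_mul, Complex.re_ofReal_mul]
    exact le_rfl
  · have hp : p ∈ Set.Ioo (0 : ℝ) 1 := ⟨hp0, hp1⟩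
    obtain ⟨i0, e0⟩ := SS_rep U V B a x p hp ha hx
    obtain ⟨i1, e1⟩ := SS_rep U₁ V₁ B a₁ x₁ p hp ha₁ hx₁
    obtain ⟨i2, e2⟩ := SS_rep U₂ V₂ B a₂ x₂ p hp ha₂ hx₂
    rw [e0, e1, e2]
    have hK := inv_nonneg.mpr (Real.integral_rpowIntegrand₀₁_one_pos hp).le
    have main : (c * ∫ t in Set.Ioi (0 : ℝ), t ^ (p - 2) * PP t U₁ V₁ B a₁ x₁) +
        (1 - c) * ∫ t in Set.Ioi (0 : ℝ), t ^ (p - 2) * PP t U₂ V₂ B a₂ x₂ ≤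
        ∫ t in Set.Ioi (0 : ℝ), t ^ (p - 2) * PP t U V B a x := by
      rw [← integral_const_mul, ← integral_const_mul,
        ← integral_add (i1.const_mul c) (i2.const_mul (1 - c))]
      refine setIntegral_mono_on ((i1.const_mul c).add (i2.const_mul (1 - c))) i0
        measurableSet_Ioi fun t ht => ?_
      have ht : 0 < t := ht
      have := mul_le_mul_of_nonneg_left (PP_concave t c ht.le hc0 hc1 B U U₁ U₂ V V₁ V₂ a a₁ a₂
        x x₁ x₂ hU hV ha hx hU₁ hV₁ ha₁ hx₁ hU₂ hV₂ ha₂ hx₂ hA hX)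
        (Real.rpow_nonneg ht.le (p - 2))
      linarith
    have := mul_le_mul_of_nonneg_left main hK
    linarith

lemma DD_mul {n : ℕ} (U : Matrix (Fin n) (Fin n) ℂ) (f g : Fin n → ℝ) (hU : U * Uᴴ = 1) :
    DD U f * DD U g = DD U (fun i => f i * g i) := by
  have hU' : Uᴴ * U = 1 := mul_eq_one_comm.mp hU
  simp only [DD]
  calc _ = U * Matrix.diagonal (fun i => ((f i : ℝ) : ℂ)) * (Uᴴ * U) *
        Matrix.diagonal (fun i => ((g i : ℝ) : ℂ)) * Uᴴ := by simp only [Matrix.mul_assoc]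
    _ = U * (Matrix.diagonal (fun i => ((f i : ℝ) : ℂ)) *
        Matrix.diagonal (fun i => ((g i : ℝ) : ℂ))) * Uᴴ := by
          rw [hU', Matrix.mul_one]; simp only [Matrix.mul_assoc]
    _ = _ := by rw [Matrix.diagonal_mul_diagonal]; push_cast; rfl

lemma DD_trace {n : ℕ} (U : Matrix (Fin n) (Fin n) ℂ) (f : Fin n → ℝ) (hU : U * Uᴴ = 1) :
    (DD U f).trace.re = ∑ i, f i := by
  have hU' : Uᴴ * U = 1 := mul_eq_one_comm.mp hU
  rw [DD, Matrix.trace_mul_comm, ← Matrix.mul_assoc, hU', Matrix.one_mul, Matrix.trace_diagonal]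
  simp

lemma DD_psd {n : ℕ} (U : Matrix (Fin n) (Fin n) ℂ) (f : Fin n → ℝ) (hf : ∀ i, 0 ≤ f i) :
    (DD U f).PosSemidef := by
  refine Matrix.PosSemidef.mul_mul_conjTranspose_same (Matrix.PosSemidef.diagonal ?_) U
  intro i
  simpa using hf i

lemma diag_exists {n : ℕ} (A : Matrix (Fin n) (Fin n) ℂ) (hA : A.PosSemidef) :
    ∃ (U : Matrix (Fin n) (Fin n) ℂ) (a : Fin n → ℝ), U * Uᴴ = 1 ∧ (∀ i, 0 ≤ a i) ∧
      A = DD U a ∧ ∀ p, mpow A p = DD U (fun i => a i ^ p) := by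
  refine ⟨hA.1.eigenvectorUnitary, hA.1.eigenvalues, ?_, hA.eigenvalues_nonneg, ?_, ?_⟩
  · exact Unitary.coe_mul_star_self hA.1.eigenvectorUnitary
  · have := hA.1.spectral_theorem
    rw [Unitary.conjStarAlgAut_apply] at this
    exact this
  · intro p
    rw [mpow, dif_pos hA.1]
    rfl

lemma SS_one {n : ℕ} (Q V : Matrix (Fin n) (Fin n) ℂ) (f : Fin n → ℝ)
    (hQ : Q * Qᴴ = 1) (hV : V * Vᴴ = 1) :
    SS Q V 1 f (fun _ => 1) = ∑ i, f i := by
  have := trace_SS Q V 1 f (fun _ => 1)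
  rw [DD_one _ hV] at this
  simp only [Matrix.conjTranspose_one, Matrix.one_mul, Matrix.mul_one] at this
  rw [← DD_trace Q f hQ, this, Complex.ofReal_re]

lemma SS_one' {n : ℕ} (Q V : Matrix (Fin n) (Fin n) ℂ) (f : Fin n → ℝ)
    (hQ : Q * Qᴴ = 1) (hV : V * Vᴴ = 1) :
    SS Q V 1 (fun _ => 1) f = ∑ i, f i := by
  have := trace_SS Q V 1 (fun _ => 1) f
  rw [DD_one _ hQ] at this
  simp only [Matrix.conjTranspose_one, Matrix.one_mul, Matrix.mul_one] at this
  rw [← DD_trace V f hV, this, Complex.ofReal_re]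

lemma young_SS {n : ℕ} (p : ℝ) (hp0 : 0 < p) (hp1 : p ≤ 1)
    (Q V : Matrix (Fin n) (Fin n) ℂ) (y x : Fin n → ℝ)
    (hQ : Q * Qᴴ = 1) (hV : V * Vᴴ = 1) (hy : ∀ i, 0 ≤ y i) (hx : ∀ i, 0 ≤ x i) :
    SS Q V 1 y (fun i => x i ^ (1 - p)) ≤ p * ∑ i, y i ^ (1 / p) + (1 - p) * ∑ i, x i := by
  rw [← SS_one Q V _ hQ hV, ← SS_one' Q V _ hQ hV]
  simp only [SS, Finset.mul_sum, ← Finset.sum_add_distrib]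
  refine Finset.sum_le_sum fun i _ => Finset.sum_le_sum fun j _ => ?_
  have h := Real.geom_mean_le_arith_mean2_weighted hp0.le (sub_nonneg.mpr hp1)
    (Real.rpow_nonneg (hy i) (1 / p)) (hx j) (by ring)
  rw [← Real.rpow_mul (hy i), one_div_mul_cancel hp0.ne', Real.rpow_one] at h
  have := mul_le_mul_of_nonneg_right h (Complex.normSq_nonneg ((Qᴴ * (1 : Matrix (Fin n) (Fin n) ℂ) * V) i j))
  linarith

lemma self_SS {n : ℕ} (p : ℝ) (hp0 : 0 < p) (B U V : Matrix (Fin n) (Fin n) ℂ) (a y : Fin n → ℝ)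
    (hV : V * Vᴴ = 1) (hy : ∀ i, 0 ≤ y i)
    (h : Bᴴ * DD U (fun i => a i ^ p) * B = DD V y) :
    SS U V B (fun i => a i ^ p) (fun i => (y i ^ (1 / p)) ^ (1 - p)) = ∑ i, y i ^ (1 / p) := by
  have := trace_SS U V B (fun i => a i ^ p) (fun i => (y i ^ (1 / p)) ^ (1 - p))
  rw [h, DD_mul _ _ _ hV] at this
  have h2 := DD_trace V (fun i => y i * (y i ^ (1 / p)) ^ (1 - p)) hV
  rw [this, Complex.ofReal_re] at h2
  rw [h2]
  refine Finset.sum_congr rfl fun i _ => ?_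
  rcases (hy i).eq_or_lt with h | h
  · rw [← h, Real.zero_rpow (one_div_pos.mpr hp0).ne', zero_mul]
  · rw [← Real.rpow_mul h.le]
    nth_rewrite 1 [← Real.rpow_one (y i)]
    rw [← Real.rpow_add h]
    congr 1
    field_simp
    ring

lemma comb_psd {n : ℕ} (A₁ A₂ : Matrix (Fin n) (Fin n) ℂ) (hA₁ : A₁.PosSemidef)
    (hA₂ : A₂.PosSemidef) (c : ℝ) (hc0 : 0 ≤ c) (hc1 : c ≤ 1) :
    ((c : ℂ) • A₁ + ((1 : ℂ) - (c : ℂ)) • A₂).PosSemidef := by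
  have e : (1 : ℂ) - (c : ℂ) = ((1 - c : ℝ) : ℂ) := by push_cast; ring
  rw [e]
  refine (hA₁.smul ?_).add (hA₂.smul ?_)
  · exact_mod_cast hc0
  · exact_mod_cast sub_nonneg.mpr hc1

theorem stmt5 {n : ℕ} (B : Matrix (Fin n) (Fin n) ℂ) (p : ℝ) (hp0 : 0 < p) (hp1 : p ≤ 1)
    (A₁ A₂ : Matrix (Fin n) (Fin n) ℂ) (hA₁ : A₁.PosSemidef) (hA₂ : A₂.PosSemidef)
    (c : ℝ) (hc0 : 0 ≤ c) (hc1 : c ≤ 1) :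
    c * (mpow (Bᴴ * mpow A₁ p * B) (1 / p)).trace.re +
        (1 - c) * (mpow (Bᴴ * mpow A₂ p * B) (1 / p)).trace.re ≤
      (mpow (Bᴴ * mpow ((c : ℂ) • A₁ + ((1 : ℂ) - (c : ℂ)) • A₂) p * B) (1 / p)).trace.re := by
  obtain ⟨U, a, hU, ha, hA, hAp⟩ := diag_exists _ (comb_psd A₁ A₂ hA₁ hA₂ c hc0 hc1)
  obtain ⟨U₁, a₁, hU₁, ha₁, hA1, hAp₁⟩ := diag_exists _ hA₁
  obtain ⟨U₂, a₂, hU₂, ha₂, hA2, hAp₂⟩ := diag_exists _ hA₂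
  rw [hAp, hAp₁, hAp₂]
  have hY : ∀ (U : Matrix (Fin n) (Fin n) ℂ) (a : Fin n → ℝ), (∀ i, 0 ≤ a i) →
      (Bᴴ * DD U (fun i => a i ^ p) * B).PosSemidef := fun U a ha =>
    (DD_psd U _ fun i => Real.rpow_nonneg (ha i) p).conjTranspose_mul_mul_same B
  obtain ⟨Q, y, hQ, hy, hYe, hYp⟩ := diag_exists _ (hY U a ha)
  obtain ⟨V₁, y₁, hV₁, hy₁, hYe₁, hYp₁⟩ := diag_exists _ (hY U₁ a₁ ha₁)
  obtain ⟨V₂, y₂, hV₂, hy₂, hYe₂, hYp₂⟩ := diag_exists _ (hY U₂ a₂ ha₂)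
  rw [hYp, hYp₁, hYp₂]
  have hx₁ : ∀ i, 0 ≤ y₁ i ^ (1 / p) := fun i => Real.rpow_nonneg (hy₁ i) _
  have hx₂ : ∀ i, 0 ≤ y₂ i ^ (1 / p) := fun i => Real.rpow_nonneg (hy₂ i) _
  obtain ⟨V, x, hV, hx, hX, -⟩ := diag_exists _
    (comb_psd _ _ (DD_psd V₁ _ hx₁) (DD_psd V₂ _ hx₂) c hc0 hc1)
  have hL := lieb p c hp0 hp1 hc0 hc1 B U U₁ U₂ V V₁ V₂ a a₁ a₂ x (fun i => y₁ i ^ (1 / p))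
    (fun i => y₂ i ^ (1 / p)) hU hV ha hx hU₁ hV₁ ha₁ hx₁ hU₂ hV₂ ha₂ hx₂
    (by rw [← hA, ← hA1, ← hA2]) hX.symm
  rw [self_SS p hp0 B U₁ V₁ a₁ y₁ hV₁ hy₁ hYe₁, self_SS p hp0 B U₂ V₂ a₂ y₂ hV₂ hy₂ hYe₂] at hL
  have hT : ∑ i, x i = c * ∑ i, y₁ i ^ (1 / p) + (1 - c) * ∑ i, y₂ i ^ (1 / p) := by
    have e : (1 : ℂ) - (c : ℂ) = ((1 - c : ℝ) : ℂ) := by push_cast; ring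
    rw [← DD_trace V x hV, ← hX, e, Matrix.trace_add, Matrix.trace_smul, Matrix.trace_smul,
      Complex.add_re, smul_eq_mul, smul_eq_mul, Complex.re_ofReal_mul, Complex.re_ofReal_mul,
      DD_trace _ _ hV₁, DD_trace _ _ hV₂]
  have hS : SS U V B (fun i => a i ^ p) (fun i => x i ^ (1 - p)) =
      SS Q V 1 y (fun i => x i ^ (1 - p)) := by
    have h1 := trace_SS U V B (fun i => a i ^ p) (fun i => x i ^ (1 - p))
    have h2 := trace_SS Q V 1 y (fun i => x i ^ (1 - p))
    rw [hYe] at h1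
    rw [Matrix.conjTranspose_one, Matrix.one_mul, Matrix.mul_one, h1] at h2
    exact_mod_cast h2
  have hYg := young_SS p hp0 hp1 Q V y x hQ hV hy hx
  rw [DD_trace _ _ hQ, DD_trace _ _ hV₁, DD_trace _ _ hV₂, ← hT]
  rw [← hT, hS] at hL
  have : p * ∑ i, x i ≤ p * ∑ i, y i ^ (1 / p) := by linarith
  exact le_of_mul_le_mul_left this hp0
end

section
/- Let 0 < s ≤ 1, s ≤ r ≤ 1, and let Φ : M_m(ℂ) → M_n(ℂ) be a sesquiunital Schwarz map (unital with Φ†(I) = (n/m) I). Then for all positive semidefinite A ∈ M_n(ℂ) and all B ∈ M_m(ℂ): tr[(Φ(B)* A^s Φ(B))^{r/s}] ≤ (n/m)^{1-r} tr[(B* Φ†(A)^s B)^{r/s}]. -/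
open Matrix
open scoped ComplexOrder

noncomputable def sd {k : ℕ} (U : Matrix (Fin k) (Fin k) ℂ) (a : Fin k → ℝ) :
    Matrix (Fin k) (Fin k) ℂ := U * Matrix.diagonal (fun i => ((a i : ℝ) : ℂ)) * Uᴴ

theorem exists_sd {k : ℕ} (M : Matrix (Fin k) (Fin k) ℂ) (hM : M.PosSemidef) :
    ∃ (U : Matrix (Fin k) (Fin k) ℂ) (a : Fin k → ℝ), U * Uᴴ = 1 ∧ Uᴴ * U = 1 ∧ (∀ i, 0 ≤ a i) ∧
      M = sd U a ∧ ∀ p : ℝ, mpow M p = sd U (fun i => a i ^ p) := by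
  refine ⟨hM.1.eigenvectorUnitary, hM.1.eigenvalues, ?_, ?_, hM.eigenvalues_nonneg, ?_, ?_⟩
  · exact Unitary.coe_mul_star_self _
  · exact Unitary.coe_star_mul_self _
  · have := hM.1.spectral_theorem
    rw [Unitary.conjStarAlgAut_apply] at this
    exact this
  · intro p
    rw [mpow, dif_pos hM.1]; rfl

theorem sd_psd {k : ℕ} (U : Matrix (Fin k) (Fin k) ℂ) (a : Fin k → ℝ) (ha : ∀ i, 0 ≤ a i) :
    (sd U a).PosSemidef := by
  apply PosSemidef.mul_mul_conjTranspose_same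
  apply PosSemidef.diagonal
  intro i; simpa using ha i

theorem sd_trace {k : ℕ} (U : Matrix (Fin k) (Fin k) ℂ) (hU : Uᴴ * U = 1) (a : Fin k → ℝ) :
    (sd U a).trace = ((∑ i, a i : ℝ) : ℂ) := by
  rw [sd, Matrix.trace_mul_comm, ← Matrix.mul_assoc, hU, Matrix.one_mul, Matrix.trace_diagonal]
  push_cast; rfl

theorem sd_one {k : ℕ} (U : Matrix (Fin k) (Fin k) ℂ) (hU : U * Uᴴ = 1) :
    sd U (fun _ => 1) = 1 := by
  simp [sd, hU]

theorem sd_mul {k : ℕ} (U : Matrix (Fin k) (Fin k) ℂ) (hU : Uᴴ * U = 1) (a b : Fin k → ℝ) :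
    sd U a * sd U b = sd U (fun i => a i * b i) := by
  have : sd U a * sd U b = U * (Matrix.diagonal (fun i => ((a i : ℝ) : ℂ)) * ((Uᴴ * U) *
    Matrix.diagonal (fun i => ((b i : ℝ) : ℂ)))) * Uᴴ := by
    simp only [sd, Matrix.mul_assoc]
  rw [this, hU, Matrix.one_mul, Matrix.diagonal_mul_diagonal, sd]
  push_cast; rfl

theorem form {k : ℕ} (U V X : Matrix (Fin k) (Fin k) ℂ) (a z : Fin k → ℝ) :
    (Xᴴ * sd U a * X * sd V z).trace =
      ((∑ i, ∑ j, a i * z j * Complex.normSq ((Uᴴ * X * V) i j) : ℝ) : ℂ) := by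
  set T := Uᴴ * X * V with hT
  have h1 : (Xᴴ * sd U a * X * sd V z).trace =
      (Tᴴ * (Matrix.diagonal (fun i => ((a i : ℝ) : ℂ)) * (T *
        Matrix.diagonal (fun i => ((z i : ℝ) : ℂ))))).trace := by
    have : Xᴴ * sd U a * X * sd V z = (Xᴴ * U * Matrix.diagonal (fun i => ((a i : ℝ) : ℂ)) * Uᴴ *
      X * V * Matrix.diagonal (fun i => ((z i : ℝ) : ℂ))) * Vᴴ := by
      simp only [sd, Matrix.mul_assoc]
    rw [this, Matrix.trace_mul_comm, hT]
    simp only [Matrix.conjTranspose_mul, Matrix.conjTranspose_conjTranspose, Matrix.mul_assoc]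
  rw [h1, Matrix.trace, Finset.sum_comm]
  push_cast
  apply Finset.sum_congr rfl
  intro j _
  rw [Matrix.diag_apply, Matrix.mul_apply]
  apply Finset.sum_congr rfl
  intro i _
  rw [Matrix.diagonal_mul, Matrix.mul_diagonal, Matrix.conjTranspose_apply,
    Complex.normSq_eq_conj_mul_self]
  simp only [RCLike.star_def]
  ring

theorem tr_psd {k : ℕ} {M N : Matrix (Fin k) (Fin k) ℂ} (hM : M.PosSemidef) (hN : N.PosSemidef) :
    0 ≤ (M * N).trace.re := by
  obtain ⟨U, a, h1, h2, ha, rfl, -⟩ := exists_sd M hM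
  obtain ⟨V, z, h3, h4, hz, rfl, -⟩ := exists_sd N hN
  have := form U V 1 a z
  simp only [conjTranspose_one, Matrix.one_mul, Matrix.mul_one] at this
  rw [this, Complex.ofReal_re]
  refine Finset.sum_nonneg fun i _ => Finset.sum_nonneg fun j _ => ?_
  exact mul_nonneg (mul_nonneg (ha i) (hz j)) (Complex.normSq_nonneg _)

section maps
variable {m n : ℕ} {Φ : Matrix (Fin m) (Fin m) ℂ →ₗ[ℂ] Matrix (Fin n) (Fin n) ℂ}
    {Ψ : Matrix (Fin n) (Fin n) ℂ →ₗ[ℂ] Matrix (Fin m) (Fin m) ℂ}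

theorem phi_pos (hΦ : IsSchwarz Φ) (K : Matrix (Fin m) (Fin m) ℂ) : (Φ (Kᴴ * K)).PosSemidef := by
  have := (hΦ K).add (posSemidef_conjTranspose_mul_self (Φ K))
  simpa using this

theorem phi_star (hΦ : IsSchwarz Φ) (K : Matrix (Fin m) (Fin m) ℂ) : Φ Kᴴ = (Φ K)ᴴ := by
  have key : ∀ K, (Φ K)ᴴ + (Φ Kᴴ)ᴴ = Φ K + Φ Kᴴ := by
    intro K
    have h1 := (phi_pos hΦ (K + 1)).1.eq
    have h2 := (phi_pos hΦ K).1.eq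
    have h3 := (phi_pos hΦ 1).1.eq
    have e : (K + 1)ᴴ * (K + 1) = Kᴴ * K + Kᴴ + K + (1ᴴ * 1) := by
      simp [Matrix.add_mul, Matrix.mul_add]; abel
    rw [e] at h1
    simp only [map_add, conjTranspose_add, h2, h3] at h1
    have h4 := add_right_cancel h1
    rw [add_assoc, add_assoc] at h4
    have := add_left_cancel h4
    rw [add_comm, this, add_comm]
  have k1 := key K
  have k2 := key (Complex.I • K)
  simp only [conjTranspose_smul, map_smul, RCLike.star_def, Complex.conj_I, star_neg] at k2
  ext i j
  have e1 := congrFun (congrFun k1 i) j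
  have e2 := congrFun (congrFun k2 i) j
  simp only [Matrix.add_apply, Matrix.smul_apply, smul_eq_mul] at e1 e2
  have e3 : Complex.I * (Φ Kᴴ i j - (Φ K)ᴴ i j) * 2 = 0 := by
    linear_combination e2 - Complex.I * e1
  simpa [sub_eq_zero] using e3

theorem psi_star (hΦ : IsSchwarz Φ) (hadj : IsHSAdjoint Φ Ψ) (X : Matrix (Fin n) (Fin n) ℂ) :
    Ψ Xᴴ = (Ψ X)ᴴ := by
  rw [ext_iff_trace_mul_right]
  intro Y
  have h := hadj Xᴴ Yᴴ
  have h2 := hadj X Y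
  rw [← h2]
  have h3 := congrArg star h
  rw [← trace_conjTranspose, ← trace_conjTranspose, phi_star hΦ] at h3
  simp only [conjTranspose_mul, conjTranspose_conjTranspose] at h3
  rw [trace_mul_comm, ← h3, trace_mul_comm]

theorem psi_pos (hΦ : IsSchwarz Φ) (hadj : IsHSAdjoint Φ Ψ) {X : Matrix (Fin n) (Fin n) ℂ}
    (hX : X.PosSemidef) : (Ψ X).PosSemidef := by
  have hH : (Ψ X).IsHermitian := by
    rw [IsHermitian, ← psi_star hΦ hadj, hX.1.eq]
  rw [posSemidef_iff_dotProduct_mulVec]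
  refine ⟨hH, fun x => ?_⟩
  set K : Matrix (Fin m) (Fin m) ℂ := vecMulVec x (star x) with hK
  have hKp : K.PosSemidef := posSemidef_vecMulVec_self_star x
  obtain ⟨C, hC⟩ : ∃ C, K = Cᴴ * C := by
    obtain ⟨U, a, h1, h2, ha, h3, -⟩ := exists_sd K hKp
    refine ⟨sd U (fun i => Real.sqrt (a i)), ?_⟩
    rw [(sd_psd U _ fun i => Real.sqrt_nonneg (a i)).1.eq, sd_mul U h2]
    simpa [ha] using h3
  have h := hadj X K
  rw [hX.1.eq, hH.eq] at h
  have h2 : (Ψ X * K).trace = star x ⬝ᵥ (Ψ X *ᵥ x) := by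
    rw [hK, mul_vecMulVec, trace_vecMulVec, dotProduct_comm]
  have h3 : 0 ≤ (X * Φ K).trace.re := by
    rw [hC]; exact tr_psd hX (phi_pos hΦ C)
  rw [← h2, Complex.nonneg_iff]
  refine ⟨by rw [← h]; exact h3, ?_⟩
  have : star (Ψ X * K).trace = (Ψ X * K).trace := by
    rw [← trace_conjTranspose, conjTranspose_mul, hH.eq, hKp.1.eq, trace_mul_comm]
  exact (Complex.conj_eq_iff_im.1 this).symm

/-- tr[A Φ(K)Φ(K)*] ≤ tr[Ψ(A) K K*] -/
theorem ineq1 (hΦ : IsSchwarz Φ) (hadj : IsHSAdjoint Φ Ψ) {A : Matrix (Fin n) (Fin n) ℂ}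
    (hA : A.PosSemidef) (K : Matrix (Fin m) (Fin m) ℂ) :
    (A * ((Φ K)ᴴ * Φ K)).trace.re ≤ (Ψ A * (Kᴴ * K)).trace.re := by
  have h := hadj A (Kᴴ * K)
  rw [hA.1.eq, (psi_pos hΦ hadj hA).1.eq] at h
  rw [← h]
  have := tr_psd hA (hΦ K)
  rw [Matrix.mul_sub, trace_sub, Complex.sub_re] at this
  linarith

theorem ineqL (hΦ : IsSchwarz Φ) (hadj : IsHSAdjoint Φ Ψ) {A : Matrix (Fin n) (Fin n) ℂ}
    (hA : A.PosSemidef) (K : Matrix (Fin m) (Fin m) ℂ) :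
    ((Φ K)ᴴ * A * Φ K).trace.re ≤ (Kᴴ * Ψ A * K).trace.re := by
  have h := ineq1 hΦ hadj hA Kᴴ
  rw [phi_star hΦ, conjTranspose_conjTranspose, conjTranspose_conjTranspose] at h
  rwa [Matrix.mul_assoc, trace_mul_comm, Matrix.mul_assoc, Matrix.mul_assoc Kᴴ, trace_mul_comm Kᴴ,
    Matrix.mul_assoc]

theorem ineqR (hΦ : IsSchwarz Φ) (hadj : IsHSAdjoint Φ Ψ) {A : Matrix (Fin n) (Fin n) ℂ}
    (hA : A.PosSemidef) (K : Matrix (Fin m) (Fin m) ℂ) :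
    ((Φ K)ᴴ * Φ K * A).trace.re ≤ (Kᴴ * K * Ψ A).trace.re := by
  have h := ineq1 hΦ hadj hA K
  rwa [trace_mul_comm, trace_mul_comm (Kᴴ * K)]

end maps

theorem scal {s : ℝ} (hs : s ∈ Set.Ioo (0:ℝ) 1) : ∃ μ : MeasureTheory.Measure ℝ, ∀ a z : ℝ,
    0 ≤ a → 0 ≤ z →
    MeasureTheory.IntegrableOn (fun t => t ^ (s - 1) * (a * z / (t * z + a))) (Set.Ioi 0) μ ∧
    a ^ s * z ^ (1 - s) = ∫ t in Set.Ioi 0, t ^ (s - 1) * (a * z / (t * z + a)) ∂μ := by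
  obtain ⟨μ, hμ⟩ := Real.exists_measure_rpow_eq_integral_rpowIntegrand₀₁ hs
  refine ⟨μ, fun a z ha hz => ?_⟩
  rcases hz.eq_or_lt with rfl | hz
  · have : (1 - s) ≠ 0 := by have := hs.2; intro h; linarith
    simp [Real.zero_rpow this]
  obtain ⟨h1, h2⟩ := hμ (a / z) (div_nonneg ha hz.le)
  have he : Set.EqOn (fun t => z * Real.rpowIntegrand₀₁ s t (a / z))
      (fun t => t ^ (s - 1) * (a * z / (t * z + a))) (Set.Ioi 0) := by
    intro t ht
    have ht : 0 < t := ht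
    simp only
    rw [Real.rpowIntegrand₀₁_eq_pow_div hs ht.le (div_nonneg ha hz.le)]
    have : 0 < t * z + a := by positivity
    have : 0 < t + a / z := by positivity
    field_simp
  constructor
  · exact (MeasureTheory.integrableOn_congr_fun he measurableSet_Ioi).1 (h1.const_mul z)
  · rw [← MeasureTheory.setIntegral_congr_fun measurableSet_Ioi he,
      MeasureTheory.integral_const_mul, ← h2, Real.div_rpow ha hz.le, Real.rpow_sub hz,
      Real.rpow_one]
    field_simp

theorem sum_mono {ι κ : Type*} [Fintype ι] [Fintype κ] {s : ℝ} (hs : s ∈ Set.Ioo (0:ℝ) 1)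
    (α a z : ι → ℝ) (β b y : κ → ℝ) (ha : ∀ i, 0 ≤ a i) (hz : ∀ i, 0 ≤ z i)
    (hb : ∀ i, 0 ≤ b i) (hy : ∀ i, 0 ≤ y i)
    (h : ∀ t : ℝ, 0 < t → ∑ i, a i * z i / (t * z i + a i) * α i
        ≤ ∑ i, b i * y i / (t * y i + b i) * β i) :
    ∑ i, a i ^ s * z i ^ (1 - s) * α i ≤ ∑ i, b i ^ s * y i ^ (1 - s) * β i := by
  obtain ⟨μ, hμ⟩ := scal hs
  have e : ∀ {τ : Type _} [Fintype τ] (α a z : τ → ℝ) (ha : ∀ i, 0 ≤ a i) (hz : ∀ i, 0 ≤ z i),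
      ∑ i, a i ^ s * z i ^ (1 - s) * α i =
      ∫ t in Set.Ioi 0, ∑ i, t ^ (s - 1) * (a i * z i / (t * z i + a i)) * α i ∂μ := by
    intro τ _ α a z ha hz
    rw [MeasureTheory.integral_finsetSum]
    · refine Finset.sum_congr rfl fun i _ => ?_
      rw [MeasureTheory.integral_mul_const, ← (hμ _ _ (ha i) (hz i)).2]
    · intro i _
      exact (hμ _ _ (ha i) (hz i)).1.mul_const _
  have e' : ∑ i, b i ^ s * y i ^ (1 - s) * β i =
      ∫ t in Set.Ioi 0, ∑ i, t ^ (s - 1) * (b i * y i / (t * y i + b i)) * β i ∂μ := by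
    rw [MeasureTheory.integral_finsetSum]
    · refine Finset.sum_congr rfl fun i _ => ?_
      rw [MeasureTheory.integral_mul_const, ← (hμ _ _ (hb i) (hy i)).2]
    · intro i _
      exact (hμ _ _ (hb i) (hy i)).1.mul_const _
  rw [e α a z ha hz, e']
  apply MeasureTheory.setIntegral_mono_on
  · exact MeasureTheory.integrable_finsetSum _ fun i _ => (hμ _ _ (ha i) (hz i)).1.mul_const _
  · exact MeasureTheory.integrable_finsetSum _ fun i _ => (hμ _ _ (hb i) (hy i)).1.mul_const _
  · exact measurableSet_Ioi
  · intro t ht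
    have ht : 0 < t := ht
    simp only [mul_assoc, ← Finset.mul_sum]
    have := h t ht
    exact mul_le_mul_of_nonneg_left this (Real.rpow_nonneg ht.le _)

/-- the parallel sum form -/
noncomputable def pf {k : ℕ} (U V X : Matrix (Fin k) (Fin k) ℂ) (a z : Fin k → ℝ) (t : ℝ) : ℝ :=
  ∑ i, ∑ j, a i * z j / (t * z j + a i) * Complex.normSq ((Uᴴ * X * V) i j)

theorem form_left {k : ℕ} (U V Y : Matrix (Fin k) (Fin k) ℂ) (a : Fin k → ℝ)
    (hV : V * Vᴴ = 1) : (Yᴴ * sd U a * Y).trace.re =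
      ∑ i, ∑ j, a i * Complex.normSq ((Uᴴ * Y * V) i j) := by
  have := form U V Y a (fun _ => 1)
  rw [sd_one V hV, Matrix.mul_one] at this
  rw [this, Complex.ofReal_re]; simp

theorem form_right {k : ℕ} (U V Y : Matrix (Fin k) (Fin k) ℂ) (z : Fin k → ℝ)
    (hU : U * Uᴴ = 1) : (Yᴴ * Y * sd V z).trace.re =
      ∑ i, ∑ j, z j * Complex.normSq ((Uᴴ * Y * V) i j) := by
  have := form U V Y (fun _ => 1) z
  rw [sd_one U hU, Matrix.mul_one] at this
  rw [this, Complex.ofReal_re]; simp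

theorem scal_le {a z t : ℝ} (ha : 0 ≤ a) (hz : 0 ≤ z) (ht : 0 < t) (x y : ℂ) :
    a * z / (t * z + a) * Complex.normSq x ≤
      t⁻¹ * (a * Complex.normSq y) + z * Complex.normSq (x - y) := by
  rcases (by positivity : 0 ≤ t * z + a).eq_or_lt with h | h
  · rw [← h]; simp
    have := Complex.normSq_nonneg y
    have := Complex.normSq_nonneg (x - y)
    positivity
  · have e : t⁻¹ * (a * Complex.normSq y) + z * Complex.normSq (x - y) -
        a * z / (t * z + a) * Complex.normSq x =
        Complex.normSq ((t * z + a : ℝ) * y - (t * z : ℝ) * x) / (t * (t * z + a)) := by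
      simp only [Complex.normSq_apply, Complex.sub_re, Complex.sub_im, Complex.mul_re,
        Complex.mul_im, Complex.ofReal_re, Complex.ofReal_im]
      field_simp
      ring
    have : 0 ≤ Complex.normSq ((t * z + a : ℝ) * y - (t * z : ℝ) * x) / (t * (t * z + a)) :=
      div_nonneg (Complex.normSq_nonneg _) (by positivity)
    linarith

theorem scal_eq {a z t : ℝ} (ha : 0 ≤ a) (hz : 0 ≤ z) (ht : 0 < t) (x : ℂ) :
    t⁻¹ * (a * Complex.normSq ((t * z / (t * z + a) : ℝ) * x)) +
      z * Complex.normSq (x - (t * z / (t * z + a) : ℝ) * x) =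
    a * z / (t * z + a) * Complex.normSq x := by
  rcases (by positivity : 0 ≤ t * z + a).eq_or_lt with h | h
  · have h1 : z = 0 := by
      by_contra hne
      have : 0 < z := lt_of_le_of_ne hz (Ne.symm hne)
      have : 0 < t * z := by positivity
      linarith
    subst h1; simp
  · simp only [Complex.normSq_apply, Complex.sub_re, Complex.sub_im, Complex.mul_re,
        Complex.mul_im, Complex.ofReal_re, Complex.ofReal_im]
    field_simp
    ring

theorem pf_le {k : ℕ} (U V X Y : Matrix (Fin k) (Fin k) ℂ) (a z : Fin k → ℝ) {t : ℝ}
    (hU : U * Uᴴ = 1) (hV : V * Vᴴ = 1) (ha : ∀ i, 0 ≤ a i) (hz : ∀ i, 0 ≤ z i) (ht : 0 < t) :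
    pf U V X a z t ≤ t⁻¹ * (Yᴴ * sd U a * Y).trace.re +
      ((X - Y)ᴴ * (X - Y) * sd V z).trace.re := by
  rw [form_left U V Y a hV, form_right U V _ z hU, pf]
  simp only [Finset.mul_sum, ← Finset.sum_add_distrib]
  refine Finset.sum_le_sum fun i _ => Finset.sum_le_sum fun j _ => ?_
  rw [Matrix.mul_sub, Matrix.sub_mul, Matrix.sub_apply]
  exact scal_le (ha i) (hz j) ht _ _

theorem pf_attain {k : ℕ} (U V X : Matrix (Fin k) (Fin k) ℂ) (a z : Fin k → ℝ) {t : ℝ}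
    (hU : U * Uᴴ = 1) (hV : V * Vᴴ = 1) (hU' : Uᴴ * U = 1) (hV' : Vᴴ * V = 1)
    (ha : ∀ i, 0 ≤ a i) (hz : ∀ i, 0 ≤ z i) (ht : 0 < t) :
    ∃ Y, t⁻¹ * (Yᴴ * sd U a * Y).trace.re +
      ((X - Y)ᴴ * (X - Y) * sd V z).trace.re = pf U V X a z t := by
  let T : Matrix (Fin k) (Fin k) ℂ := Matrix.of fun i j =>
    ((t * z j / (t * z j + a i) : ℝ) : ℂ) * (Uᴴ * X * V) i j
  have hT : Uᴴ * (U * T * Vᴴ) * V = T := by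
    have : Uᴴ * (U * T * Vᴴ) * V = (Uᴴ * U) * T * (Vᴴ * V) := by simp only [Matrix.mul_assoc]
    rw [this, hU', hV']; simp
  refine ⟨U * T * Vᴴ, ?_⟩
  rw [form_left U V _ a hV, form_right U V _ z hU, pf]
  simp only [Finset.mul_sum, ← Finset.sum_add_distrib]
  refine Finset.sum_congr rfl fun i _ => Finset.sum_congr rfl fun j _ => ?_
  rw [Matrix.mul_sub, Matrix.sub_mul, Matrix.sub_apply, hT]
  exact scal_eq (ha i) (hz j) ht _

theorem lieb_s11 {m n : ℕ} {Φ : Matrix (Fin m) (Fin m) ℂ →ₗ[ℂ] Matrix (Fin n) (Fin n) ℂ}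
    {Ψ : Matrix (Fin n) (Fin n) ℂ →ₗ[ℂ] Matrix (Fin m) (Fin m) ℂ}
    (hΦ : IsSchwarz Φ) (hadj : IsHSAdjoint Φ Ψ) {s : ℝ} (hs0 : 0 < s) (hs1 : s ≤ 1)
    (U V : Matrix (Fin n) (Fin n) ℂ) (U' V' : Matrix (Fin m) (Fin m) ℂ)
    (a z : Fin n → ℝ) (b y : Fin m → ℝ)
    (hU : U * Uᴴ = 1) (hV : V * Vᴴ = 1)
    (hU1 : U' * U'ᴴ = 1) (hV1 : V' * V'ᴴ = 1) (hU2 : U'ᴴ * U' = 1) (hV2 : V'ᴴ * V' = 1)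
    (ha : ∀ i, 0 ≤ a i) (hz : ∀ i, 0 ≤ z i) (hb : ∀ i, 0 ≤ b i) (hy : ∀ i, 0 ≤ y i)
    (hA : Ψ (sd U a) = sd U' b) (hZ : Ψ (sd V z) = sd V' y)
    (B : Matrix (Fin m) (Fin m) ℂ) :
    ((Φ B)ᴴ * sd U (fun i => a i ^ s) * Φ B * sd V (fun i => z i ^ (1 - s))).trace.re ≤
    (Bᴴ * sd U' (fun i => b i ^ s) * B * sd V' (fun i => y i ^ (1 - s))).trace.re := by
  rcases hs1.eq_or_lt with rfl | hs1
  · simp only [Real.rpow_one, sub_self, Real.rpow_zero]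
    rw [sd_one V hV, sd_one V' hV1, Matrix.mul_one, Matrix.mul_one, ← hA]
    exact ineqL hΦ hadj (sd_psd U a ha) B
  rw [form, form, Complex.ofReal_re, Complex.ofReal_re, ← Fintype.sum_prod_type',
    ← Fintype.sum_prod_type']
  apply sum_mono ⟨hs0, hs1⟩ _ (fun p : Fin n × Fin n => a p.1) (fun p => z p.2) _
    (fun p : Fin m × Fin m => b p.1) (fun p => y p.2) (fun _ => ha _) (fun _ => hz _)
    (fun _ => hb _) (fun _ => hy _)
  intro t ht
  obtain ⟨K, hK⟩ := pf_attain U' V' B b y hU1 hV1 hU2 hV2 hb hy ht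
  have h1 := pf_le U V (Φ B) (Φ K) a z hU hV ha hz ht
  have h2 := ineqL hΦ hadj (sd_psd U a ha) K
  have h3 := ineqR hΦ hadj (sd_psd V z hz) (B - K)
  rw [hA] at h2
  rw [hZ, map_sub] at h3
  have h4 := mul_le_mul_of_nonneg_left h2 (inv_nonneg.2 ht.le)
  have h5 : pf U V (Φ B) a z t ≤ pf U' V' B b y t := by linarith
  rw [pf, pf, ← Fintype.sum_prod_type', ← Fintype.sum_prod_type'] at h5
  exact h5

theorem jensen {m n : ℕ} {Φ : Matrix (Fin m) (Fin m) ℂ →ₗ[ℂ] Matrix (Fin n) (Fin n) ℂ}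
    {Ψ : Matrix (Fin n) (Fin n) ℂ →ₗ[ℂ] Matrix (Fin m) (Fin m) ℂ}
    (hΦ : IsSchwarz Φ) (hadj : IsHSAdjoint Φ Ψ) {c q : ℝ} (hc : 0 < c) (hq : 1 ≤ q)
    (hunital : Φ 1 = 1) (hsemi : Ψ 1 = (c : ℂ) • 1)
    (U : Matrix (Fin n) (Fin n) ℂ) (W : Matrix (Fin m) (Fin m) ℂ)
    (z : Fin n → ℝ) (w : Fin m → ℝ)
    (hU : U * Uᴴ = 1) (hU' : Uᴴ * U = 1) (hW : W * Wᴴ = 1) (hW' : Wᴴ * W = 1)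
    (hz : ∀ i, 0 ≤ z i) (hZ : Ψ (sd U z) = sd W w) :
    ∑ j, w j ^ q ≤ c ^ (q - 1) * ∑ i, z i ^ q := by
  let e : Fin n → Matrix (Fin n) (Fin n) ℂ := fun i => sd U (Pi.single i 1)
  let N : Fin m → Fin n → ℝ := fun j i => ((Wᴴ * Ψ (e i) * W) j j).re
  have hpsd : ∀ i, (Ψ (e i)).PosSemidef := fun i =>
    psi_pos hΦ hadj (sd_psd U _ fun k => by
      by_cases h : k = i
      · subst h; simp
      · simp [Pi.single_eq_of_ne h])
  have hdec : ∀ x : Fin n → ℝ, sd U x = ∑ i, (x i : ℂ) • e i := by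
    intro x
    have : Matrix.diagonal (fun i => ((x i : ℝ) : ℂ)) =
        ∑ i, (x i : ℂ) • Matrix.diagonal (fun k => (((Pi.single i 1 : Fin n → ℝ) k : ℝ) : ℂ)) := by
      ext k l
      rw [Matrix.sum_apply]
      by_cases h : k = l
      · subst h
        rw [Finset.sum_eq_single k]
        · simp
        · intro l _ hl
          simp [Pi.single_eq_of_ne (Ne.symm hl)]
        · simp
      · simp [h]
    simp only [sd, e]
    rw [this]
    simp only [Matrix.mul_sum, Matrix.sum_mul, Matrix.mul_smul, Matrix.smul_mul]
  have hpair : ∀ (x : Fin n → ℝ) j, ((Wᴴ * Ψ (sd U x) * W) j j).re = ∑ i, N j i * x i := by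
    intro x j
    rw [hdec, map_sum]
    simp only [map_smul, Matrix.mul_sum, Matrix.sum_mul, Matrix.mul_smul, Matrix.smul_mul,
      Matrix.sum_apply, Complex.re_sum, Matrix.smul_apply, smul_eq_mul, Complex.re_ofReal_mul]
    exact Finset.sum_congr rfl fun i _ => mul_comm _ _
  have hN0 : ∀ j i, 0 ≤ N j i := by
    intro j i
    have := ((hpsd i).conjTranspose_mul_mul_same W).diag_nonneg (i := j)
    exact (Complex.nonneg_iff.1 this).1
  have hNr : ∀ j, ∑ i, N j i = c := by
    intro j
    have := hpair (fun _ => 1) j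
    rw [sd_one U hU, hsemi] at this
    simp [hW'] at this
    exact this.symm
  have hNc : ∀ i, ∑ j, N j i = 1 := by
    intro i
    have h1 : ∑ j, N j i = (Wᴴ * Ψ (e i) * W).trace.re := by
      simp [N, Matrix.trace, Complex.re_sum]
    have h2 : (Wᴴ * Ψ (e i) * W).trace = (Ψ (e i)).trace := by
      rw [Matrix.mul_assoc, trace_mul_comm, Matrix.mul_assoc, hW, Matrix.mul_one]
    have h3 := hadj (e i) 1
    rw [hunital, Matrix.mul_one, Matrix.mul_one, (hpsd i).1.eq] at h3
    rw [h1, h2, ← h3, trace_conjTranspose, sd_trace U hU']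
    simp
  have hw : ∀ j, w j = ∑ i, N j i * z i := by
    intro j
    rw [← hpair z j, hZ, sd]
    have : Wᴴ * (W * Matrix.diagonal (fun i => ((w i : ℝ) : ℂ)) * Wᴴ) * W =
      (Wᴴ * W) * Matrix.diagonal (fun i => ((w i : ℝ) : ℂ)) * (Wᴴ * W) := by
      simp only [Matrix.mul_assoc]
    rw [this, hW']; simp
  have hj : ∀ j, w j ^ q ≤ c ^ (q - 1) * ∑ i, N j i * z i ^ q := by
    intro j
    have h1 := Real.rpow_arith_mean_le_arith_mean_rpow Finset.univ (fun i => N j i / c) z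
      (fun i _ => div_nonneg (hN0 j i) hc.le)
      (by rw [← Finset.sum_div, hNr, div_self hc.ne']) (fun i _ => hz i) hq
    have h2 : ∀ x : Fin n → ℝ, ∑ i, N j i / c * x i = (∑ i, N j i * x i) / c := by
      intro x
      rw [Finset.sum_div]
      exact Finset.sum_congr rfl fun i _ => by ring
    rw [h2, h2, ← hw j, Real.div_rpow _ hc.le] at h1
    · rw [Real.rpow_sub hc, Real.rpow_one]
      rw [div_le_div_iff₀ (by positivity) hc] at h1
      rw [div_mul_eq_mul_div, le_div_iff₀ hc]
      linarith
    · rw [hw j]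
      exact Finset.sum_nonneg fun i _ => mul_nonneg (hN0 j i) (hz i)
  calc ∑ j, w j ^ q ≤ ∑ j, c ^ (q - 1) * ∑ i, N j i * z i ^ q := Finset.sum_le_sum fun j _ => hj j
    _ = c ^ (q - 1) * ∑ i, z i ^ q := by
      rw [← Finset.mul_sum, Finset.sum_comm]
      congr 1
      refine Finset.sum_congr rfl fun i _ => ?_
      rw [← Finset.sum_mul, hNc, one_mul]

theorem holder {k : ℕ} {p q : ℝ} (hpq : p.HolderConjugate q) (V W : Matrix (Fin k) (Fin k) ℂ)
    (y w : Fin k → ℝ) (hV : V * Vᴴ = 1) (hV' : Vᴴ * V = 1) (hW : W * Wᴴ = 1) (hW' : Wᴴ * W = 1)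
    (hy : ∀ i, 0 ≤ y i) (hw : ∀ i, 0 ≤ w i) :
    (sd V y * sd W w).trace.re ≤ (∑ i, y i ^ p) ^ (1 / p) * (∑ i, w i ^ q) ^ (1 / q) := by
  have h := form V W 1 y w
  simp only [conjTranspose_one, Matrix.one_mul, Matrix.mul_one] at h
  have hL : ∀ x : Fin k → ℝ, ∑ i, ∑ j, x i * Complex.normSq ((Vᴴ * W) i j) = ∑ i, x i := by
    intro x
    have := form_left V W 1 x hW
    simp only [conjTranspose_one, Matrix.one_mul, Matrix.mul_one] at this
    rw [← this, sd_trace V hV', Complex.ofReal_re]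
  have hR : ∀ x : Fin k → ℝ, ∑ i, ∑ j, x j * Complex.normSq ((Vᴴ * W) i j) = ∑ i, x i := by
    intro x
    have := form_right V W 1 x hV
    simp only [conjTranspose_one, Matrix.one_mul, Matrix.mul_one] at this
    rw [← this, sd_trace W hW', Complex.ofReal_re]
  rw [h, Complex.ofReal_re, ← Fintype.sum_prod_type']
  set N : Fin k × Fin k → ℝ := fun x => Complex.normSq ((Vᴴ * W) x.1 x.2) with hN
  have hN0 : ∀ x, 0 ≤ N x := fun x => Complex.normSq_nonneg _
  have hp := hpq.pos
  have hq := hpq.symm.pos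
  have key := Real.inner_le_Lp_mul_Lq_of_nonneg Finset.univ (f := fun x => y x.1 * N x ^ (1 / p))
    (g := fun x => w x.2 * N x ^ (1 / q)) hpq
    (fun x _ => mul_nonneg (hy _) (Real.rpow_nonneg (hN0 x) _))
    (fun x _ => mul_nonneg (hw _) (Real.rpow_nonneg (hN0 x) _))
  have e1 : ∑ x : Fin k × Fin k, (y x.1 * N x ^ (1 / p)) ^ p = ∑ i, y i ^ p := by
    rw [← hL (fun i => y i ^ p), ← Fintype.sum_prod_type']
    refine Finset.sum_congr rfl fun x _ => ?_
    rw [Real.mul_rpow (hy _) (Real.rpow_nonneg (hN0 x) _), ← Real.rpow_mul (hN0 x),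
      one_div_mul_cancel hp.ne', Real.rpow_one]
  have e2 : ∑ x : Fin k × Fin k, (w x.2 * N x ^ (1 / q)) ^ q = ∑ i, w i ^ q := by
    rw [← hR (fun i => w i ^ q), ← Fintype.sum_prod_type']
    refine Finset.sum_congr rfl fun x _ => ?_
    rw [Real.mul_rpow (hw _) (Real.rpow_nonneg (hN0 x) _), ← Real.rpow_mul (hN0 x),
      one_div_mul_cancel hq.ne', Real.rpow_one]
  rw [e1, e2] at key
  refine le_trans (le_of_eq ?_) key
  refine Finset.sum_congr rfl fun x _ => ?_
  have : N x ^ (1 / p) * N x ^ (1 / q) = N x := by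
    rw [← Real.rpow_add_of_nonneg (hN0 x) (by positivity) (by positivity), one_div, one_div,
      hpq.inv_add_inv_eq_one, Real.rpow_one]
  calc y x.1 * w x.2 * N x = y x.1 * w x.2 * (N x ^ (1 / p) * N x ^ (1 / q)) := by rw [this]
    _ = _ := by ring

theorem stmt11 {m n : ℕ} (hm : 0 < m) (s r : ℝ) (hs0 : 0 < s) (hs1 : s ≤ 1)
    (hsr : s ≤ r) (hr1 : r ≤ 1)
    (Φ : Matrix (Fin m) (Fin m) ℂ →ₗ[ℂ] Matrix (Fin n) (Fin n) ℂ)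
    (Ψ : Matrix (Fin n) (Fin n) ℂ →ₗ[ℂ] Matrix (Fin m) (Fin m) ℂ)
    (hΦ : IsSchwarz Φ) (hadj : IsHSAdjoint Φ Ψ)
    (hunital : Φ 1 = 1) (hsemi : Ψ 1 = (((n : ℝ) / m : ℝ) : ℂ) • 1)
    (A : Matrix (Fin n) (Fin n) ℂ) (hA : A.PosSemidef)
    (B : Matrix (Fin m) (Fin m) ℂ) :
    (mpow ((Φ B)ᴴ * mpow A s * Φ B) (r / s)).trace.re ≤
      ((n : ℝ) / m) ^ (1 - r) * (mpow (Bᴴ * mpow (Ψ A) s * B) (r / s)).trace.re := by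
  have hpA := psi_pos hΦ hadj hA
  obtain ⟨U, a, hU, hU', ha, hAe, hAp⟩ := exists_sd A hA
  obtain ⟨U1, b, hU1, hU1', hb, hBe, hBp⟩ := exists_sd (Ψ A) hpA
  have hXpsd : ((Φ B)ᴴ * mpow A s * Φ B).PosSemidef := by
    apply PosSemidef.conjTranspose_mul_mul_same
    rw [hAp]; exact sd_psd _ _ fun i => Real.rpow_nonneg (ha i) _
  have hYpsd : (Bᴴ * mpow (Ψ A) s * B).PosSemidef := by
    apply PosSemidef.conjTranspose_mul_mul_same
    rw [hBp]; exact sd_psd _ _ fun i => Real.rpow_nonneg (hb i) _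
  obtain ⟨V, x, hV, hV', hx, hXe, hXp⟩ := exists_sd _ hXpsd
  obtain ⟨W, y, hW, hW', hy, hYe, hYp⟩ := exists_sd _ hYpsd
  rw [hXp, hYp, sd_trace V hV', sd_trace W hW', Complex.ofReal_re, Complex.ofReal_re]
  rw [hAp] at hXe
  rw [hBp] at hYe
  have hS0 : 0 ≤ ∑ i, y i ^ (r / s) := Finset.sum_nonneg fun i _ => Real.rpow_nonneg (hy i) _
  have hT0 : 0 ≤ ∑ i, x i ^ (r / s) := Finset.sum_nonneg fun i _ => Real.rpow_nonneg (hx i) _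
  rcases Nat.eq_zero_or_pos n with rfl | hn
  · simp only [Finset.univ_eq_empty, Finset.sum_empty]
    positivity
  have hc : 0 < (n : ℝ) / m := by positivity
  set c : ℝ := (n : ℝ) / m with hcdef
  rcases hsr.eq_or_lt with rfl | hsr
  · rw [div_self hs0.ne']
    simp only [Real.rpow_one]
    have hone : ∀ {k : ℕ} (d : ℝ), sd (1 : Matrix (Fin k) (Fin k) ℂ) (fun _ => d) = (d : ℂ) • 1 := by
      intro k d
      simp [sd, Matrix.smul_one_eq_diagonal]
    have h := lieb_s11 hΦ hadj hs0 hs1 U 1 U1 1 a (fun _ => 1) b (fun _ => c) hU (by simp) hU1 (by simp)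
      hU1' (by simp) ha (fun _ => zero_le_one) hb (fun _ => hc.le) (by rw [← hAe, ← hBe])
      (by rw [hone, hone, Complex.ofReal_one, one_smul, hsemi]) B
    rw [hone, hone, hXe, hYe, Real.one_rpow, Complex.ofReal_one, one_smul, Matrix.mul_one,
      Matrix.mul_smul, Matrix.mul_one, trace_smul, sd_trace V hV', sd_trace W hW', smul_eq_mul,
      ← Complex.ofReal_mul, Complex.ofReal_re, Complex.ofReal_re] at h
    exact h
  have hs1' : s < 1 := lt_of_lt_of_le hsr hr1
  have hr0 : 0 < r := hs0.trans hsr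
  have h1s : 0 < 1 - s := by linarith
  have hrs : 0 < r - s := by linarith
  have hp1 : 1 < r / s := by rw [lt_div_iff₀ hs0]; linarith
  set p : ℝ := r / s with hpdef
  have hp0 : 0 < p := by linarith
  have hpq : p.HolderConjugate (r / (r - s)) := by
    rw [Real.holderConjugate_iff]
    refine ⟨hp1, ?_⟩
    rw [hpdef]; field_simp; ring
  set z : Fin n → ℝ := fun i => x i ^ ((p - 1) / (1 - s)) with hzdef
  have hz : ∀ i, 0 ≤ z i := fun i => Real.rpow_nonneg (hx i) _
  obtain ⟨R, w, hR, hR', hw, hwe, -⟩ := exists_sd _ (psi_pos hΦ hadj (sd_psd V z hz))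
  have h := lieb_s11 hΦ hadj hs0 hs1 U V U1 R a z b w hU hV hU1 hR hU1' hR' ha hz hb hw
    (by rw [← hAe, ← hBe]) hwe B
  rw [hXe, hYe, sd_mul V hV', sd_trace V hV', Complex.ofReal_re] at h
  have hT : ∑ i, x i * z i ^ (1 - s) = ∑ i, x i ^ p := by
    refine Finset.sum_congr rfl fun i _ => ?_
    rw [hzdef]
    simp only
    rw [← Real.rpow_mul (hx i), div_mul_cancel₀ _ h1s.ne']
    rcases (hx i).eq_or_lt with h0 | h0
    · rw [← h0, zero_mul, Real.zero_rpow hp0.ne']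
    · rw [Real.rpow_sub h0, Real.rpow_one]; field_simp
  rw [hT] at h
  have hH := holder hpq W R y (fun i => w i ^ (1 - s)) hW hW' hR hR' hy
    (fun i => Real.rpow_nonneg (hw i) _)
  have hJ := jensen hΦ hadj (q := (1 - s) * (r / (r - s))) hc
    (by rw [mul_div_assoc', le_div_iff₀ hrs]; nlinarith) hunital hsemi V R z w hV hV' hR hR' hz hwe
  have hwq : ∑ i, (w i ^ (1 - s)) ^ (r / (r - s)) = ∑ i, w i ^ ((1 - s) * (r / (r - s))) :=
    Finset.sum_congr rfl fun i _ => (Real.rpow_mul (hw i) _ _).symm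
  have hzq : ∑ i, z i ^ ((1 - s) * (r / (r - s))) = ∑ i, x i ^ p := by
    refine Finset.sum_congr rfl fun i _ => ?_
    rw [hzdef]
    simp only
    rw [← Real.rpow_mul (hx i)]
    congr 1
    rw [hpdef]; field_simp
  rw [hwq] at hH
  rw [hzq] at hJ
  set S := ∑ i, y i ^ p
  set T := ∑ i, x i ^ p
  rcases hT0.eq_or_lt with h0 | hTpos
  · rw [← h0]; positivity
  have hq0 : 0 < r / (r - s) := by positivity
  have h5 : T ≤ S ^ (1 / p) *
      (c ^ ((1 - s) * (r / (r - s)) - 1) * T) ^ (1 / (r / (r - s))) := by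
    refine h.trans (hH.trans ?_)
    refine mul_le_mul_of_nonneg_left ?_ (Real.rpow_nonneg hS0 _)
    exact Real.rpow_le_rpow (Finset.sum_nonneg fun i _ => Real.rpow_nonneg (hw i) _) hJ (by positivity)
  have h6 := Real.rpow_le_rpow hTpos.le h5 hp0.le
  have hcp : 0 ≤ c ^ ((1 - s) * (r / (r - s)) - 1) := by positivity
  rw [Real.mul_rpow (Real.rpow_nonneg hS0 _) (by positivity), ← Real.rpow_mul hS0,
    one_div_mul_cancel hp0.ne', Real.rpow_one, ← Real.rpow_mul (by positivity),
    Real.mul_rpow hcp hTpos.le, ← Real.rpow_mul hc.le] at h6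
  have e1 : 1 / (r / (r - s)) * p = p - 1 := by rw [hpdef]; field_simp
  have e2 : ((1 - s) * (r / (r - s)) - 1) * (p - 1) = 1 - r := by
    rw [hpdef]; field_simp; ring
  rw [e1, e2] at h6
  have e3 : T ^ p = T * T ^ (p - 1) := by
    rw [Real.rpow_sub hTpos, Real.rpow_one]; field_simp
  rw [e3] at h6
  have hTp : 0 < T ^ (p - 1) := Real.rpow_pos_of_pos hTpos _
  refine le_of_mul_le_mul_right ?_ hTp
  linarith
end
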